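/- Let 𝔻₀ be a multiplicative set in ℝ[x₁,…,x_d] (not necessarily finitely generated) and let f₁,…,f_k ∈ ℝ[x₁,…,x_d]. Suppose that for every finitely generated multiplicative set 𝔻 ⊆ 𝔻₀ there exist m ∈ ℕ and elements h₁,…,h_m of A_𝔻 := 𝔻⁻¹ℝ[x₁,…,x_d] such that: (i) with K_𝔻 := {t ∈ ℝ^d : q(t) ≠ 0 for all q ∈ 𝔻, and f_i(t) ≥ 0 for i = 1,…,k}, there is a constant C with |h_j(t)| ≤ C for all t ∈ K_𝔻 and j = 1,…,m; and (ii) for every λ ∈ ℝ^m of the form λ = (h₁(t),…,h_m(t)) with t ∈ K_𝔻, there exist a finitely generated multiplicative set ℰ_λ in the one-variable polynomial ring ℝ[y], a finite-dimensional commutative unital ℝ-algebra C_λ, and a surjective unital ℝ-algebra homomorphism (ℰ_λ⁻¹ℝ[y]) ⊗_ℝ C_λ → A_𝔻/I_λ, where I_λ is the ideal of A_𝔻 generated by h₁−λ₁·1,…,h_m−λ_m·1. Let T₀ be the preordering of A₀ := 𝔻₀⁻¹ℝ[x₁,…,x_d] generated by the images of f₁,…,f_k. Then for every linear functional L₀ on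 A₀ with L₀(f) ≥ 0 for all f ∈ T₀ there exists a positive Borel measure μ on ℝ^d such that for all p ∈ ℝ[x₁,…,x_d] and q ∈ 𝔻₀ the function x ↦ p(x)/q(x) is μ-integrable and L₀(p/q) = ∫_{ℝ^d} p(x)/q(x) dμ(x). -/

import Mathlib

/-- The preordering of a commutative ring generated by a set `S`:
the smallest subset containing all squares and `S`, closed under addition
and multiplication. -/
inductive IsInPreordering {A : Type*} [CommRing A] (S : Set A) : A → Prop
  | sq (a : A) : IsInPreordering S (a ^ 2)
  | gen {a : A} : a ∈ S → IsInPreordering S a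
  | add {a b : A} : IsInPreordering S a → IsInPreordering S b → IsInPreordering S (a + b)
  | mul {a b : A} : IsInPreordering S a → IsInPreordering S b → IsInPreordering S (a * b)

/-- Evaluation of an element of the localization `𝔻⁻¹ℝ[x₁,…,x_d]` at a point `t`
at which no element of `𝔻` vanishes. -/
noncomputable def evalLoc {d : ℕ} (𝔻 : Submonoid (MvPolynomial (Fin d) ℝ)) (t : Fin d → ℝ)
    (ht : ∀ q ∈ 𝔻, MvPolynomial.eval t q ≠ 0) : Localization 𝔻 →+* ℝ :=
  IsLocalization.lift (M := 𝔻) (S := Localization 𝔻)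
    (g := (MvPolynomial.eval t : MvPolynomial (Fin d) ℝ →+* ℝ))
    (fun y => isUnit_iff_ne_zero.2 (ht y y.2))

/-- A finite-dimensional commutative unital real algebra. -/
structure FinCommAlg where
  carrier : Type
  [isRing : CommRing carrier]
  [isAlgebra : Algebra ℝ carrier]
  findim : FiniteDimensional ℝ carrier

attribute [instance] FinCommAlg.isRing FinCommAlg.isAlgebra

/-!
A linear functional on `𝔻₀⁻¹ℝ[x₁,…,x_d]` is given by a measure as soon as it is nonnegative on the
fractions that are nonnegative where they are defined. It then extends positively to the compactly
supported continuous functions (M. Riesz), where it is integration against a measure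
(Riesz–Markov–Kakutani); and a fraction `r` is approximated by compactly supported functions with
an error at most `ε` times a fraction, so that the formula passes to `r` in the limit.

Each fraction lies in a finitely generated algebra, where positivity can be tested on the extreme
points of compact caps of the cone of positive functionals. By the Positivstellensatz and the
Cauchy–Schwarz inequality, multiplying the argument of a positive functional by an element with
values in `[0, 1]` on the characters gives a positive functional again. Hence bounded elements act
on an extremal functional by scalars, and it factors through a fibre of the bounded map `h`, which
is empty only if the functional vanishes. The same reduction, applied to the elements of `C` on a
fibre that is a quotient of `ℰ⁻¹ℝ[y] ⊗ C`, leaves a quotient of `ℰ⁻¹ℝ[y]`: either this is the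
localized line, where nonnegative elements are sums of squares, or it has finitely many characters,
so that all of its elements are bounded.
-/

/-! ### Orderings, real closed fields and the transfer principle -/

namespace RationalMoment

open Polynomial SignType Filter

section Preordering

variable {A : Type*} [CommRing A]

/-- The preordering `IsInPreordering S` generated by a set `S`, as a subsemiring. -/
def preordering (S : Set A) : Subsemiring A where
  carrier := {a | IsInPreordering S a}
  mul_mem' := .mul
  one_mem' := by simpa using IsInPreordering.sq (S := S) 1
  add_mem' := .add
  zero_mem' := by simpa using IsInPreordering.sq (S := S) 0

lemma subset_preordering (S : Set A) : S ⊆ preordering S := fun _ ↦ .gen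

lemma sq_mem_preordering (S : Set A) (a : A) : a ^ 2 ∈ preordering S := .sq a

lemma preordering_le {S : Set A} {P : Subsemiring A} (hsq : ∀ a, a ^ 2 ∈ P) (hS : S ⊆ P) :
    preordering S ≤ P := by
  intro a ha
  induction ha with
  | sq a => exact hsq a
  | gen h => exact hS h
  | add _ _ iha ihb => exact P.add_mem iha ihb
  | mul _ _ iha ihb => exact P.mul_mem iha ihb

lemma exists_eq_add_mul_of_mem_preordering_insert {S : Set A} {x a : A}
    (ha : a ∈ preordering (insert x S)) :
    ∃ p ∈ preordering S, ∃ q ∈ preordering S, a = p + q * x := by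
  have h0 := (preordering S).zero_mem
  induction ha with
  | sq b => exact ⟨b ^ 2, .sq b, 0, h0, by ring⟩
  | gen h =>
    rcases h with rfl | h
    · exact ⟨0, h0, 1, (preordering S).one_mem, by ring⟩
    · exact ⟨_, .gen h, 0, h0, by ring⟩
  | add _ _ iha ihb =>
    obtain ⟨p, hp, q, hq, rfl⟩ := iha
    obtain ⟨p', hp', q', hq', rfl⟩ := ihb
    exact ⟨p + p', hp.add hp', q + q', hq.add hq', by ring⟩
  | mul _ _ iha ihb =>
    obtain ⟨p, hp, q, hq, rfl⟩ := iha
    obtain ⟨p', hp', q', hq', rfl⟩ := ihb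
    exact ⟨p * p' + q * q' * x ^ 2, (hp.mul hp').add ((hq.mul hq').mul (.sq x)),
      p * q' + q * p', (hp.mul hq').add (hq.mul hp'), by ring⟩

lemma exists_ge_forall_notMem (T : RingPreordering A) :
    ∃ P ≥ T, ∀ a ∉ P, ∃ p ∈ P, ∃ q ∈ P, -1 = p + q * a := by
  obtain ⟨P, hTP, hP⟩ := zorn_le_nonempty_Ici₀ T (fun c _ hchain y hy ↦ by
    have hne : (RingPreordering.toSubsemiring '' c).Nonempty := ⟨_, y, hy, rfl⟩
    have hdir : DirectedOn (· ≤ ·) (RingPreordering.toSubsemiring '' c) :=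
      directedOn_image.2 hchain.directedOn
    refine ⟨⟨sSup (RingPreordering.toSubsemiring '' c), fun {x} hx ↦ ?_, fun h ↦ ?_⟩,
      fun z hz ↦ le_sSup (α := Subsemiring A) (Set.mem_image_of_mem _ hz)⟩
    · exact le_sSup (α := Subsemiring A) (Set.mem_image_of_mem _ hy) (y.mem_of_isSquare hx)
    · obtain ⟨_, ⟨Q, _, rfl⟩, hQ⟩ := (Subsemiring.mem_sSup_of_directedOn hne hdir).1 h
      exact Q.neg_one_notMem hQ) T le_rfl
  refine ⟨P, hTP, fun a ha ↦ ?_⟩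
  by_contra hcon
  let Q : RingPreordering A :=
    .mk' (preordering (insert a P)) .add .mul
      (fun x ↦ by simpa [sq] using sq_mem_preordering (insert a (P : Set A)) x) (fun h ↦ hcon (by
        obtain ⟨p, hp, q, hq, e⟩ := exists_eq_add_mul_of_mem_preordering_insert h
        have hle : preordering (P : Set A) ≤ P.toSubsemiring :=
          preordering_le P.pow_two_mem subset_rfl
        exact ⟨p, hle hp, q, hle hq, e⟩))
  have hle : P ≤ Q := fun x hx ↦ IsInPreordering.gen (.inr hx)
  exact ha (hP (b := Q) hle (IsInPreordering.gen (.inl rfl)))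

lemma exists_isOrdering_ge (T : RingPreordering A) : ∃ P ≥ T, P.IsOrdering := by
  obtain ⟨P, hTP, hP⟩ := exists_ge_forall_notMem T
  refine ⟨P, hTP, RingPreordering.isOrdering_iff.2 fun a b hab ↦ ?_⟩
  by_contra! hcon
  obtain ⟨p, hp, q, hq, e⟩ := hP a hcon.1
  obtain ⟨p', hp', q', hq', e'⟩ := hP b hcon.2
  have key : (-1 : A) = p + p' + p * p' + q * q' * -(a * b) := by
    linear_combination (1 + p') * e - (q * a) * e'
  exact P.neg_one_notMem (key ▸ add_mem (add_mem (add_mem hp hp') (mul_mem hp hp'))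
    (mul_mem (mul_mem hq hq') hab))

/-- The preordering `{p / s²}` that an ordering `P` induces on the residue field at its support. -/
def residuePreordering (P : RingPreordering A) [P.IsOrdering] :
    RingPreordering (FractionRing (A ⧸ P.support)) :=
  letI ψ : A →+* FractionRing (A ⧸ P.support) := algebraMap A _
  have hψ (a : A) : ψ a = 0 ↔ a ∈ P.support := by
    rw [← Ideal.Quotient.eq_zero_iff_mem]
    exact IsFractionRing.to_map_eq_zero_iff (R := A ⧸ P.support) (K := FractionRing (A ⧸ P.support))
  .mk' {x | ∃ p ∈ P, ∃ s, ψ s ≠ 0 ∧ x = ψ p / ψ s ^ 2}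
    (by
      rintro _ _ ⟨p, hp, s, hs, rfl⟩ ⟨q, hq, t, ht, rfl⟩
      refine ⟨p * t ^ 2 + q * s ^ 2, add_mem (mul_mem hp (P.pow_two_mem t))
        (mul_mem hq (P.pow_two_mem s)), s * t, by simp [hs, ht], ?_⟩
      simp only [map_mul, map_add, map_pow]
      field_simp)
    (by
      rintro _ _ ⟨p, hp, s, hs, rfl⟩ ⟨q, hq, t, ht, rfl⟩
      exact ⟨p * q, mul_mem hp hq, s * t, by simp [hs, ht], by simp only [map_mul]; ring⟩)
    (by
      intro x
      obtain ⟨a, s, hs, rfl⟩ := IsFractionRing.div_surjective (A := A ⧸ P.support) x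
      obtain ⟨a, rfl⟩ := Ideal.Quotient.mk_surjective a
      obtain ⟨s, rfl⟩ := Ideal.Quotient.mk_surjective s
      refine ⟨a ^ 2, P.pow_two_mem a, s,
        IsFractionRing.to_map_ne_zero_of_mem_nonZeroDivisors (R := A ⧸ P.support) hs, ?_⟩
      rw [map_pow, ← div_pow, sq]
      rfl)
    (by
      rintro ⟨p, hp, s, hs, h⟩
      have hsum : p + s ^ 2 ∈ P.support := (hψ _).1 <| by
        rw [map_add, map_pow]
        field_simp at h
        linear_combination -h
      have hneg : -s ^ 2 ∈ P := by simpa [neg_add_rev] using add_mem hp hsum.2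
      exact hs ((hψ s).2 (Ideal.IsPrime.mem_of_pow_mem inferInstance 2
        ⟨P.pow_two_mem s, hneg⟩)))

lemma algebraMap_mem_residuePreordering {P : RingPreordering A} [P.IsOrdering] {a : A}
    (ha : a ∈ P) : algebraMap A _ a ∈ residuePreordering P :=
  ⟨a, ha, 1, by simp, by simp⟩

end Preordering

section IntermediateValue

/-- The intermediate value property for polynomials, which characterizes real closed fields. -/
def PolynomialIVP (R : Type*) [Field R] [LinearOrder R] : Prop :=
  ∀ (f : R[X]) (a b : R), a < b → f.eval a * f.eval b < 0 → ∃ c ∈ Set.Ioo a b, f.eval c = 0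

lemma polynomialIVP_real : PolynomialIVP ℝ := by
  intro f a b hab hf
  rcases mul_neg_iff.1 hf with ⟨ha, hb⟩ | ⟨ha, hb⟩
  · exact intermediate_value_Ioo' hab.le f.continuousOn ⟨hb, ha⟩
  · exact intermediate_value_Ioo hab.le f.continuousOn ⟨ha, hb⟩

variable {E : Type*} [Field E] [LinearOrder E] [IsStrictOrderedRing E]

lemma exists_irreducible_dvd_eval_mul_eval_neg {a b : E} {g : E[X]}
    (hg : g.eval a * g.eval b < 0) :
    ∃ p, Irreducible p ∧ p ∣ g ∧ p.eval a * p.eval b < 0 := by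
  induction g using WfDvdMonoid.induction_on_irreducible with
  | zero => simp at hg
  | unit u hu =>
    obtain ⟨e, -, rfl⟩ := isUnit_iff.1 hu
    exact absurd hg (by simpa using mul_self_nonneg e)
  | mul u p _ hp ih =>
    have hprod : (p.eval a * p.eval b) * (u.eval a * u.eval b) < 0 := by
      rw [eval_mul, eval_mul] at hg
      linarith
    rcases mul_neg_iff.1 hprod with ⟨-, hu⟩ | ⟨hpab, -⟩
    · obtain ⟨q, hq, hqu, hqab⟩ := ih hu
      exact ⟨q, hq, hqu.mul_left p, hqab⟩
    · exact ⟨p, hp, dvd_mul_right p u, hpab⟩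

/-- The elements `c h²` of an algebra over an ordered field, with `0 ≤ c`. -/
def weightedSquares (E K : Type*) [Field E] [LinearOrder E] [IsStrictOrderedRing E] [CommRing K]
    [Algebra E K] : Submonoid K where
  carrier := {x | ∃ c : E, 0 ≤ c ∧ ∃ h : K, x = algebraMap E K c * h ^ 2}
  one_mem' := ⟨1, zero_le_one, 1, by simp⟩
  mul_mem' := by
    rintro _ _ ⟨c, hc, h, rfl⟩ ⟨c', hc', h', rfl⟩
    exact ⟨c * c', mul_nonneg hc hc', h * h', by rw [map_mul]; ring⟩

lemma eval_nonneg_of_mem_closure_weightedSquares {w : E[X]}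
    (hw : w ∈ (weightedSquares E E[X]).subsemiringClosure) (x : E) : 0 ≤ w.eval x := by
  induction hw using AddSubmonoid.closure_induction with
  | mem w hw =>
    obtain ⟨c, hc, h, rfl⟩ := hw
    simpa using mul_nonneg hc (sq_nonneg (h.eval x))
  | zero => simp
  | add v w _ _ hv hw => simpa using add_nonneg hv hw

lemma exists_reduced_mem_closure_weightedSquares {f : E[X]} (hf : 0 < f.natDegree) {w : E[X]}
    (hw : w ∈ (weightedSquares E E[X]).subsemiringClosure) :
    ∃ v ∈ (weightedSquares E E[X]).subsemiringClosure,
      v.natDegree ≤ 2 * (f.natDegree - 1) ∧ f ∣ w - v := by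
  induction hw using AddSubmonoid.closure_induction with
  | mem w hw =>
    obtain ⟨c, hc, h, rfl⟩ := hw
    refine ⟨algebraMap E E[X] c * (h % f) ^ 2, AddSubmonoid.subset_closure ⟨c, hc, _, rfl⟩, ?_, ?_⟩
    · have hmod : (h % f).natDegree ≤ f.natDegree - 1 :=
        Nat.le_sub_one_of_lt (natDegree_mod_lt h hf.ne')
      exact (natDegree_C_mul_le c _).trans (natDegree_pow_le.trans (by gcongr))
    · refine ⟨algebraMap E E[X] c * (h / f) * (h + h % f), ?_⟩
      linear_combination algebraMap E E[X] c * (h + h % f) *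
        (-EuclideanDomain.div_add_mod h f)
  | zero => exact ⟨0, zero_mem _, by simp, by simp⟩
  | add w w' _ _ ih ih' =>
    obtain ⟨v, hv, hdeg, hdvd⟩ := ih
    obtain ⟨v', hv', hdeg', hdvd'⟩ := ih'
    exact ⟨v + v', add_mem hv hv', (natDegree_add_le v v').trans (max_le hdeg hdeg'),
      by simpa only [add_sub_add_comm] using dvd_add hdvd hdvd'⟩

-- Reducing modulo `f` makes the cofactor of `1 + w` a sign-changing polynomial of smaller degree.
lemma not_dvd_one_add_of_mem_closure_weightedSquares {f : E[X]} (hf : Irreducible f) {a b : E}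
    (hab : f.eval a * f.eval b < 0) {w : E[X]}
    (hw : w ∈ (weightedSquares E E[X]).subsemiringClosure) : ¬ f ∣ 1 + w := by
  induction hn : f.natDegree using Nat.strong_induction_on generalizing f w with
  | _ n ih =>
  intro hdvd
  obtain ⟨v, hv, hdeg, hwv⟩ := exists_reduced_mem_closure_weightedSquares hf.natDegree_pos hw
  obtain ⟨g, hg⟩ : f ∣ 1 + v := by
    simpa only [add_sub_assoc, sub_sub_cancel] using dvd_sub hdvd hwv
  have hpos (x : E) : 0 < f.eval x * g.eval x := by
    have := eval_nonneg_of_mem_closure_weightedSquares hv x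
    rw [← eval_mul, ← hg, eval_add, eval_one]
    linarith
  have hgab : g.eval a * g.eval b < 0 := by
    have hprod := mul_pos (hpos a) (hpos b)
    rw [mul_mul_mul_comm] at hprod
    exact neg_of_mul_pos_right hprod hab.le
  have hg0 : g ≠ 0 := by rintro rfl; simp at hgab
  have hlt : g.natDegree < n := by
    have h1v : (1 + v).natDegree ≤ 2 * (n - 1) :=
      (natDegree_add_le 1 v).trans (max_le (by simp) (hn ▸ hdeg))
    rw [hg, natDegree_mul hf.ne_zero hg0] at h1v
    have := hf.natDegree_pos
    lia
  obtain ⟨p, hp, hpg, hpab⟩ := exists_irreducible_dvd_eval_mul_eval_neg hgab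
  exact ih p.natDegree ((natDegree_le_of_dvd hpg hg0).trans_lt hlt) hp hpab hv rfl
    (hg ▸ hpg.mul_left f)

lemma exists_isOrdering_adjoinRoot {f : E[X]} (hf : Irreducible f) {a b : E}
    (hab : f.eval a * f.eval b < 0) :
    ∃ Q : RingPreordering (AdjoinRoot f), Q.IsOrdering ∧
      ∀ c : E, 0 ≤ c → algebraMap E (AdjoinRoot f) c ∈ Q := by
  let W := (weightedSquares E (AdjoinRoot f)).subsemiringClosure
  have hsub {c : E} (hc : 0 ≤ c) (h : AdjoinRoot f) : algebraMap E _ c * h ^ 2 ∈ W :=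
    AddSubmonoid.subset_closure ⟨c, hc, h, rfl⟩
  have hlift {x : AdjoinRoot f} (hx : x ∈ W) :
      ∃ w ∈ (weightedSquares E E[X]).subsemiringClosure, AdjoinRoot.mk f w = x := by
    induction hx using AddSubmonoid.closure_induction with
    | mem x hx =>
      obtain ⟨c, hc, h, rfl⟩ := hx
      obtain ⟨h, rfl⟩ := AdjoinRoot.mk_surjective h
      exact ⟨C c * h ^ 2, AddSubmonoid.subset_closure ⟨c, hc, h, rfl⟩, by simp⟩
    | zero => exact ⟨0, zero_mem _, map_zero _⟩
    | add x y _ _ hx hy =>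
      obtain ⟨v, hv, rfl⟩ := hx
      obtain ⟨w, hw, rfl⟩ := hy
      exact ⟨v + w, add_mem hv hw, map_add _ v w⟩
  have hneg : -1 ∉ W := fun h ↦ by
    obtain ⟨w, hw, hw1⟩ := hlift h
    refine not_dvd_one_add_of_mem_closure_weightedSquares hf hab hw (AdjoinRoot.mk_eq_zero.1 ?_)
    rw [map_add, map_one, hw1, add_neg_cancel]
  obtain ⟨Q, hTQ, hQ⟩ := exists_isOrdering_ge (A := AdjoinRoot f)
    (.mk' W add_mem mul_mem (fun x ↦ by simpa [sq] using hsub zero_le_one x) hneg)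
  exact ⟨Q, hQ, fun c hc ↦ hTQ (by simpa using hsub hc 1)⟩

end IntermediateValue

section SubfieldCone

variable {Ω : Type*} [Field Ω]

/-- `P` is the set of nonnegative elements of a field ordering of the subfield `P ∪ -P` of `Ω`.
Encoding an ordered subfield by this set makes extension of ordered subfields mere inclusion. -/
structure IsSubfieldCone (P : Subsemiring Ω) : Prop where
  eq_zero_of_mem_of_neg_mem : ∀ x ∈ P, -x ∈ P → x = 0
  inv_mem : ∀ x ∈ P, x⁻¹ ∈ P
  sub_mem_or : ∀ x ∈ P, ∀ y ∈ P, x - y ∈ P ∨ y - x ∈ P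

lemma isSubfieldCone_map_of_isOrdering {K : Type*} [Field K] (Q : RingPreordering K)
    [Q.IsOrdering] (φ : K →+* Ω) : IsSubfieldCone (Q.toSubsemiring.map φ) where
  eq_zero_of_mem_of_neg_mem := by
    rintro _ ⟨x, hx, rfl⟩ ⟨y, hy, hxy⟩
    have hy : -x ∈ Q := by rwa [φ.injective (hxy.trans (map_neg φ x).symm)] at hy
    rw [RingPreordering.eq_zero_of_mem_of_neg_mem hx hy, map_zero]
  inv_mem := by
    rintro _ ⟨x, hx, rfl⟩
    exact ⟨x⁻¹, RingPreordering.inv_mem hx, map_inv₀ φ x⟩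
  sub_mem_or := by
    rintro _ ⟨x, -, rfl⟩ _ ⟨y, -, rfl⟩
    rcases mem_or_neg_mem Q (x - y) with h | h
    · exact .inl ⟨x - y, h, map_sub φ x y⟩
    · exact .inr ⟨-(x - y), h, by rw [neg_sub, map_sub]⟩

lemma IsSubfieldCone.sSup {c : Set (Subsemiring Ω)} (hc : ∀ P ∈ c, IsSubfieldCone P)
    (hchain : IsChain (· ≤ ·) c) (hne : c.Nonempty) : IsSubfieldCone (sSup c) := by
  have hmem {x : Ω} : x ∈ SupSet.sSup c ↔ ∃ P ∈ c, x ∈ P :=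
    Subsemiring.mem_sSup_of_directedOn hne hchain.directedOn
  have hmem₂ {x y : Ω} (hx : x ∈ SupSet.sSup c) (hy : y ∈ SupSet.sSup c) :
      ∃ P ∈ c, x ∈ P ∧ y ∈ P := by
    obtain ⟨P, hP, hxP⟩ := hmem.1 hx
    obtain ⟨Q, hQ, hyQ⟩ := hmem.1 hy
    obtain ⟨R, hR, hPR, hQR⟩ := hchain.directedOn P hP Q hQ
    exact ⟨R, hR, hPR hxP, hQR hyQ⟩
  refine ⟨fun x hx hx' ↦ ?_, fun x hx ↦ ?_, fun x hx y hy ↦ ?_⟩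
  · obtain ⟨P, hP, h, h'⟩ := hmem₂ hx hx'
    exact (hc P hP).eq_zero_of_mem_of_neg_mem x h h'
  · obtain ⟨P, hP, h⟩ := hmem.1 hx
    exact hmem.2 ⟨P, hP, (hc P hP).inv_mem x h⟩
  · obtain ⟨P, hP, h, h'⟩ := hmem₂ hx hy
    exact ((hc P hP).sub_mem_or x h y h').imp (fun h ↦ hmem.2 ⟨P, hP, h⟩)
      fun h ↦ hmem.2 ⟨P, hP, h⟩

namespace IsSubfieldCone

variable {P : Subsemiring Ω}

lemma exists_le_maximal (hP : IsSubfieldCone P) : ∃ Q, P ≤ Q ∧ Maximal IsSubfieldCone Q :=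
  zorn_le_nonempty₀ {Q : Subsemiring Ω | IsSubfieldCone Q}
    (fun c hc hchain Q hQ ↦ ⟨SupSet.sSup c, .sSup hc hchain ⟨Q, hQ⟩, fun _ ↦ le_sSup⟩) P hP

/-- The subfield of `Ω` whose ordering is given by the cone `P`. -/
def subfield (hP : IsSubfieldCone P) : Subfield Ω where
  carrier := {x | x ∈ P ∨ -x ∈ P}
  mul_mem' := by
    rintro x y (hx | hx) (hy | hy)
    · exact .inl (P.mul_mem hx hy)
    · exact .inr (by simpa using P.mul_mem hx hy)
    · exact .inr (by simpa using P.mul_mem hx hy)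
    · exact .inl (by simpa using P.mul_mem hx hy)
  one_mem' := .inl P.one_mem
  add_mem' := by
    rintro x y (hx | hx) (hy | hy)
    · exact .inl (P.add_mem hx hy)
    · exact (hP.sub_mem_or x hx (-y) hy).imp (by simp) (by simp [neg_sub_left])
    · exact (hP.sub_mem_or y hy (-x) hx).imp (by simp [add_comm]) (by simp [neg_add_eq_sub])
    · exact .inr (by simpa [add_comm] using P.add_mem hy hx)
  zero_mem' := .inl P.zero_mem
  neg_mem' := by
    rintro x (hx | hx)
    · exact .inr (by simpa using hx)
    · exact .inl hx
  inv_mem' := by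
    rintro x (hx | hx)
    · exact .inl (hP.inv_mem x hx)
    · exact .inr (by simpa [inv_neg] using hP.inv_mem _ hx)

/-- The cone `P` as a cone in the subfield it orders. -/
def ringCone (hP : IsSubfieldCone P) : RingCone hP.subfield where
  __ := P.comap hP.subfield.subtype
  eq_zero_of_mem_of_neg_mem' {a} ha ha' :=
    Subtype.ext (hP.eq_zero_of_mem_of_neg_mem a ha ha')

instance (hP : IsSubfieldCone P) : HasMemOrNegMem hP.ringCone := ⟨fun a ↦ a.2⟩

/-- The ordering of `hP.subfield` with nonnegative cone `P`. -/
noncomputable abbrev linearOrder (hP : IsSubfieldCone P) : LinearOrder hP.subfield :=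
  haveI := Classical.decPred (· ∈ hP.ringCone)
  .mkOfAddGroupCone hP.ringCone

lemma isStrictOrderedRing (hP : IsSubfieldCone P) :
    letI := hP.linearOrder
    IsStrictOrderedRing hP.subfield :=
  let := hP.linearOrder
  haveI : IsOrderedRing hP.subfield := .mkOfCone hP.ringCone
  IsOrderedRing.toIsStrictOrderedRing hP.subfield

lemma nonneg_iff (hP : IsSubfieldCone P) (x : hP.subfield) :
    letI := hP.linearOrder
    0 ≤ x ↔ (x : Ω) ∈ P := by
  change x - 0 ∈ hP.ringCone ↔ _
  rw [sub_zero]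
  rfl

end IsSubfieldCone

section Maximal

variable [IsAlgClosed Ω] {P : Subsemiring Ω} (hP : Maximal IsSubfieldCone P)

include hP

-- The ordering extends to the field obtained by adjoining a root, which embeds into `Ω`;
-- maximality forces the root into the subfield.
lemma exists_root_of_maximal_isSubfieldCone :
    letI := hP.prop.linearOrder
    ∀ p : hP.prop.subfield[X], Irreducible p → ∀ a b, p.eval a * p.eval b < 0 →
      ∃ r, p.eval r = 0 := by
  let := hP.prop.linearOrder
  have := hP.prop.isStrictOrderedRing
  intro p hp a b hab
  have : Fact (Irreducible p) := ⟨hp⟩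
  obtain ⟨Q, hQ, hEQ⟩ := exists_isOrdering_adjoinRoot hp hab
  obtain ⟨α, hα⟩ := IsAlgClosed.exists_eval₂_eq_zero hP.prop.subfield.subtype p
    (degree_pos_of_irreducible hp).ne'
  let φ : AdjoinRoot p →+* Ω := AdjoinRoot.lift hP.prop.subfield.subtype α hα
  have hPQ : P ≤ Q.toSubsemiring.map φ := fun x hx ↦
    ⟨algebraMap _ _ (⟨x, .inl hx⟩ : hP.prop.subfield),
      hEQ _ ((hP.prop.nonneg_iff _).2 hx), AdjoinRoot.lift_of hα⟩
  have hQP : Q.toSubsemiring.map φ ≤ P :=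
    hP.le_of_ge (isSubfieldCone_map_of_isOrdering Q φ) hPQ
  have hroot : φ (AdjoinRoot.root p) = α := AdjoinRoot.lift_root hα
  have hmem : α ∈ hP.prop.subfield :=
    (mem_or_neg_mem Q (AdjoinRoot.root p)).imp (fun h ↦ hQP ⟨_, h, hroot⟩)
      fun h ↦ hQP ⟨_, h, by rw [map_neg, hroot]⟩
  refine ⟨⟨α, hmem⟩, hP.prop.subfield.subtype.injective ?_⟩
  rw [map_zero, ← hα]
  exact hom_eval₂ p (RingHom.id _) hP.prop.subfield.subtype ⟨α, hmem⟩

lemma polynomialIVP_of_maximal_isSubfieldCone :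
    letI := hP.prop.linearOrder
    PolynomialIVP hP.prop.subfield := by
  let := hP.prop.linearOrder
  have := hP.prop.isStrictOrderedRing
  intro f a b hab hf
  obtain ⟨p, hp, hpf, hpab⟩ := exists_irreducible_dvd_eval_mul_eval_neg hf
  obtain ⟨r, hr⟩ := exists_root_of_maximal_isSubfieldCone hP p hp a b hpab
  have hlin := degree_eq_one_of_irreducible_of_root hp hr
  obtain ⟨u, v, rfl⟩ := exists_eq_X_add_C_of_natDegree_le_one (natDegree_le_of_degree_le hlin.le)
  simp only [eval_add, eval_mul, eval_C, eval_X] at hpab hr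
  have hprod : u ^ 2 * ((a - r) * (b - r)) < 0 := by
    obtain rfl : v = -(u * r) := by linear_combination hr
    linarith
  have hneg : (a - r) * (b - r) < 0 := neg_of_mul_neg_right hprod (sq_nonneg u)
  refine ⟨r, ?_, eval_eq_zero_of_dvd_of_eval_eq_zero hpf (by simpa using hr)⟩
  rcases mul_neg_iff.1 hneg with ⟨har, hbr⟩ | ⟨har, hbr⟩
  · exact absurd hab (by linarith)
  · exact ⟨by linarith, by linarith⟩

end Maximal

lemma exists_ringHom_polynomialIVP.{u} {A : Type u} [CommRing A] (T : RingPreordering A) :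
    ∃ (R : Type u) (_ : Field R) (_ : LinearOrder R) (_ : IsStrictOrderedRing R) (φ : A →+* R),
      PolynomialIVP R ∧ ∀ a ∈ T, 0 ≤ φ a := by
  obtain ⟨P, hTP, hP⟩ := exists_isOrdering_ge T
  let κ := FractionRing (A ⧸ P.support)
  obtain ⟨Q, hQP, hQ⟩ := exists_isOrdering_ge (residuePreordering P)
  let ι : κ →+* AlgebraicClosure κ := algebraMap κ (AlgebraicClosure κ)
  obtain ⟨M, hQM, hM⟩ := (isSubfieldCone_map_of_isOrdering Q ι).exists_le_maximal
  let ψ : A →+* AlgebraicClosure κ := ι.comp (algebraMap A κ)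
  have hψ {a : A} (ha : a ∈ P) : ψ a ∈ M :=
    hQM ⟨_, hQP (algebraMap_mem_residuePreordering ha), rfl⟩
  have hψ' (a : A) : ψ a ∈ hM.prop.subfield :=
    (mem_or_neg_mem P a).imp hψ fun h ↦ by simpa using hψ h
  let := hM.prop.linearOrder
  exact ⟨hM.prop.subfield, inferInstance, inferInstance, hM.prop.isStrictOrderedRing,
    ψ.codRestrict hM.prop.subfield hψ', polynomialIVP_of_maximal_isSubfieldCone hM,
    fun a ha ↦ (hM.prop.nonneg_iff _).2 (hψ (hTP ha))⟩

end SubfieldCone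

section PolynomialIVP

variable {R : Type*} [Field R] [LinearOrder R] [IsStrictOrderedRing R]

lemma sign_eq_sign_of_mul_pos {a b : R} (h : 0 < a * b) : sign a = sign b := by
  rcases pos_and_pos_or_neg_and_neg_of_mul_pos h with ⟨ha, hb⟩ | ⟨ha, hb⟩
  · rw [sign_pos ha, sign_pos hb]
  · rw [sign_neg ha, sign_neg hb]

namespace PolynomialIVP

lemma mul_eval_pos (hR : PolynomialIVP R) {p : R[X]} {s : Set R} (hs : s.OrdConnected)
    (h : ∀ x ∈ s, p.eval x ≠ 0) {a b : R} (ha : a ∈ s) (hb : b ∈ s) :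
    0 < p.eval a * p.eval b := by
  wlog hab : a ≤ b generalizing a b
  · rw [mul_comm]
    exact this hb ha (le_of_not_ge hab)
  rcases hab.eq_or_lt with rfl | hab
  · exact mul_self_pos.2 (h a ha)
  by_contra! hneg
  obtain ⟨c, hc, hc0⟩ := hR p a b hab (hneg.lt_of_ne (mul_ne_zero (h a ha) (h b hb)))
  exact h c (hs.out ha hb (Set.Ioo_subset_Icc_self hc)) hc0

lemma exists_mem_uIoo_sign_eval_eq (hR : PolynomialIVP R) {p : R[X]} {a b : R} (hab : a ≠ b)
    (ha : p.eval a ≠ 0) : ∃ c ∈ Set.uIoo a b, sign (p.eval c) = sign (p.eval a) := by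
  have hR' {q : R[X]} {u v : R} (huv : u ≠ v) (hq : q.eval u * q.eval v < 0) :
      ∃ c ∈ Set.uIoo u v, q.eval c = 0 := by
    rcases huv.lt_or_gt with h | h
    · rw [Set.uIoo_of_lt h]
      exact hR q u v h hq
    · rw [Set.uIoo_of_gt h]
      exact hR q v u h (mul_comm (q.eval u) _ ▸ hq)
  have hm : (a + b) / 2 ∈ Set.uIoo a b := by
    rcases hab.lt_or_gt with h | h
    · rw [Set.uIoo_of_lt h]
      exact ⟨left_lt_add_div_two.2 h, add_div_two_lt_right.2 h⟩
    · rw [Set.uIoo_of_gt h]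
      exact ⟨by linarith, by linarith⟩
  rcases lt_or_ge 0 (p.eval ((a + b) / 2) * p.eval a) with h | h
  · exact ⟨_, hm, sign_eq_sign_of_mul_pos h⟩
  · have hne : a ≠ (a + b) / 2 := fun h ↦ hab (by linarith)
    have hpos : 0 < p.eval a ^ 2 := sq_pos_of_ne_zero ha
    obtain ⟨c, hc, hc0⟩ := hR' (q := p - C (p.eval a / 2)) hne (by
      simp only [eval_sub, eval_C]
      linarith)
    refine ⟨c, ?_, sign_eq_sign_of_mul_pos ?_⟩
    · rcases hab.lt_or_gt with h | h
      · rw [Set.uIoo_of_lt h] at hm ⊢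
        rw [Set.uIoo_of_lt hm.1] at hc
        exact ⟨hc.1, hc.2.trans hm.2⟩
      · rw [Set.uIoo_of_gt h] at hm ⊢
        rw [Set.uIoo_of_gt hm.2] at hc
        exact ⟨hm.1.trans hc.1, hc.2⟩
    · have hc' : p.eval c = p.eval a / 2 := by simpa [sub_eq_zero] using hc0
      rw [hc']
      linarith

-- Writing `p = (X - a) ^ (m + 1) * (X - b) ^ (n + 1) * g`, the cofactor of
-- `(X - a) ^ m * (X - b) ^ n` in the derivative of `p` changes sign between `a` and `b`.
lemma exists_derivative_eval_eq_zero_of_consecutive (hR : PolynomialIVP R) {p : R[X]} (hp : p ≠ 0)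
    {a b : R} (hab : a < b) (ha : p.eval a = 0) (hb : p.eval b = 0)
    (hno : ∀ x ∈ Set.Ioo a b, p.eval x ≠ 0) : ∃ c ∈ Set.Ioo a b, p.derivative.eval c = 0 := by
  have hab' : b - a ≠ 0 := sub_ne_zero.2 hab.ne'
  obtain ⟨m, q, hqa, rfl⟩ : ∃ m q, ¬ (X - C a) ∣ q ∧ p = (X - C a) ^ (m + 1) * q := by
    obtain ⟨q, hq, hqa⟩ := exists_eq_pow_rootMultiplicity_mul_and_not_dvd p hp a
    obtain ⟨m, hm⟩ := Nat.exists_eq_add_one.2 ((rootMultiplicity_pos hp).2 ha)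
    exact ⟨m, q, hqa, hm ▸ hq⟩
  have hqb : q.eval b = 0 := by simpa [hab'] using hb
  obtain ⟨n, g, hgb, rfl⟩ : ∃ n g, ¬ (X - C b) ∣ g ∧ q = (X - C b) ^ (n + 1) * g := by
    have hq0 := right_ne_zero_of_mul hp
    obtain ⟨g, hg, hgb⟩ := exists_eq_pow_rootMultiplicity_mul_and_not_dvd q hq0 b
    obtain ⟨n, hn⟩ := Nat.exists_eq_add_one.2 ((rootMultiplicity_pos hq0).2 hqb)
    exact ⟨n, g, hgb, hn ▸ hg⟩
  have hg : 0 < g.eval a * g.eval b := by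
    refine hR.mul_eval_pos Set.ordConnected_Icc (fun x hx h0 ↦ ?_)
      (Set.left_mem_Icc.2 hab.le) (Set.right_mem_Icc.2 hab.le)
    rcases eq_or_ne x a with rfl | hxa
    · exact hqa ((dvd_iff_isRoot.2 h0).mul_left _)
    rcases eq_or_ne x b with rfl | hxb
    · exact hgb (dvd_iff_isRoot.2 h0)
    exact hno x ⟨hx.1.lt_of_ne' hxa, hx.2.lt_of_ne hxb⟩ (by simp [h0])
  let k : R[X] := ((m : R[X]) + 1) * (X - C b) * g + ((n : R[X]) + 1) * (X - C a) * g +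
    (X - C a) * (X - C b) * derivative g
  have hk : k.eval a * k.eval b < 0 := by
    have hpos : 0 < ((m : R) + 1) * (n + 1) * (b - a) ^ 2 * (g.eval a * g.eval b) := by positivity
    simp only [k, eval_add, eval_mul, eval_sub, eval_X, eval_C, eval_natCast, eval_one]
    linarith
  obtain ⟨c, hc, hc0⟩ := hR k a b hab hk
  refine ⟨c, hc, ?_⟩
  have hder : derivative ((X - C a) ^ (m + 1) * ((X - C b) ^ (n + 1) * g)) =
      (X - C a) ^ m * (X - C b) ^ n * k := by
    simp only [derivative_mul, derivative_X_sub_C_pow, Nat.add_sub_cancel, map_natCast, k]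
    push_cast
    ring
  rw [hder, eval_mul, hc0, mul_zero]

lemma exists_derivative_eval_eq_zero (hR : PolynomialIVP R) {p : R[X]} {a b : R} (hab : a < b)
    (ha : p.eval a = 0) (hb : p.eval b = 0) : ∃ c ∈ Set.Ioo a b, p.derivative.eval c = 0 := by
  by_cases hp : p = 0
  · obtain ⟨c, hc⟩ := exists_between hab
    exact ⟨c, hc, by simp [hp]⟩
  have hroots : {x | p.eval x = 0 ∧ a < x}.Finite :=
    (finite_setOfPred_isRoot hp).subset fun x hx ↦ hx.1
  obtain ⟨b', ⟨hb', hab'⟩, hmin⟩ := hroots.exists_minimal ⟨b, hb, hab⟩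
  have hb'b : b' ≤ b := le_of_not_gt fun h ↦ h.not_ge (hmin ⟨hb, hab⟩ h.le)
  obtain ⟨c, hc, hc0⟩ := hR.exists_derivative_eval_eq_zero_of_consecutive hp hab' ha hb'
    fun x hx h0 ↦ hx.2.not_ge (hmin ⟨h0, hx.1⟩ hx.2.le)
  exact ⟨c, ⟨hc.1, hc.2.trans_le hb'b⟩, hc0⟩

lemma exists_eval_sub_eval_eq (hR : PolynomialIVP R) (p : R[X]) {a b : R} (hab : a < b) :
    ∃ c ∈ Set.Ioo a b, p.eval b - p.eval a = p.derivative.eval c * (b - a) := by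
  have hne : b - a ≠ 0 := sub_ne_zero.2 hab.ne'
  let k := (p.eval b - p.eval a) / (b - a)
  have hk : k * (b - a) = p.eval b - p.eval a := div_mul_cancel₀ _ hne
  obtain ⟨c, hc, hc0⟩ := hR.exists_derivative_eval_eq_zero
    (p := p - C (p.eval a) - C k * (X - C a)) hab (by simp) (by simp [hk])
  refine ⟨c, hc, ?_⟩
  have hc' : p.derivative.eval c = k := by simpa [sub_eq_zero] using hc0
  rw [hc', hk]

lemma eval_le_eval (hR : PolynomialIVP R) {p : R[X]} {a b : R} (hab : a ≤ b)
    (h : ∀ x ∈ Set.Icc a b, 0 ≤ p.derivative.eval x) : p.eval a ≤ p.eval b := by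
  rcases hab.eq_or_lt with rfl | hab
  · rfl
  obtain ⟨c, hc, hc'⟩ := hR.exists_eval_sub_eval_eq p hab
  have := mul_nonneg (h c (Set.Ioo_subset_Icc_self hc)) (sub_nonneg.2 hab.le)
  linarith

lemma eval_le_eval_of_nonpos (hR : PolynomialIVP R) {p : R[X]} {a b : R} (hab : a ≤ b)
    (h : ∀ x ∈ Set.Icc a b, p.derivative.eval x ≤ 0) : p.eval b ≤ p.eval a := by
  have := hR.eval_le_eval (p := -p) hab (by simpa using h)
  simpa using this

end PolynomialIVP

lemma exists_pos_eventually_le_eval {p : R[X]} (hp : 0 < p.leadingCoeff) :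
    ∃ δ > 0, ∀ᶠ x in atTop, δ ≤ p.eval x := by
  induction hn : p.natDegree generalizing p with
  | zero =>
    rw [eq_C_of_natDegree_eq_zero hn] at hp ⊢
    exact ⟨p.coeff 0, by simpa using hp, by simp⟩
  | succ n ih =>
    have hd : p.divX.natDegree = n := by rw [natDegree_divX_eq_natDegree_tsub_one, hn]; rfl
    obtain ⟨δ, hδ, h⟩ := ih (p := p.divX)
      (by rwa [leadingCoeff, hd, coeff_divX, ← hn]) hd
    refine ⟨δ, hδ, ?_⟩
    filter_upwards [h, eventually_ge_atTop 0, eventually_ge_atTop (1 - p.coeff 0 / δ)]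
      with x hx hx0 hxc
    rw [← p.divX_mul_X_add, eval_add, eval_mul, eval_X, eval_C]
    calc δ = δ * (1 - p.coeff 0 / δ) + p.coeff 0 := by field_simp; ring
      _ ≤ δ * x + p.coeff 0 := by gcongr
      _ ≤ p.divX.eval x * x + p.coeff 0 := by gcongr

lemma eventually_atTop_sign_eval (p : R[X]) :
    ∀ᶠ x in atTop, sign (p.eval x) = sign p.leadingCoeff := by
  rcases lt_trichotomy p.leadingCoeff 0 with h | h | h
  · obtain ⟨δ, hδ, hx⟩ := exists_pos_eventually_le_eval (p := -p) (by simpa using h)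
    filter_upwards [hx] with x hx
    rw [eval_neg] at hx
    rw [sign_neg h, sign_neg (by linarith)]
  · simp [leadingCoeff_eq_zero.1 h]
  · obtain ⟨δ, hδ, hx⟩ := exists_pos_eventually_le_eval h
    filter_upwards [hx] with x hx
    rw [sign_pos h, sign_pos (hδ.trans_le hx)]

lemma eventually_atBot_sign_eval (p : R[X]) :
    ∀ᶠ x in atBot, sign (p.eval x) = sign p.leadingCoeff * (-1) ^ p.natDegree := by
  have h := tendsto_neg_atBot_atTop.eventually (eventually_atTop_sign_eval (p.comp (-X)))
  filter_upwards [h] with x hx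
  rw [leadingCoeff_comp (by simp), leadingCoeff_neg, leadingCoeff_X, sign_mul, sign_pow,
    Left.sign_neg, sign_one] at hx
  simpa using hx

end PolynomialIVP

lemma exists_next_related {α β : Type*} [LinearOrder α] [LinearOrder β] {ρ : α → β → Prop}
    {Z : Set α} {W : Set β} (hW : W.Finite) (hZW : ∀ {a b}, ρ a b → (a ∈ Z ↔ b ∈ W))
    (hleft : ∀ a ∈ Z, ∃ b, ρ a b) (hright : ∀ b ∈ W, ∃ a, ρ a b)
    (hmono : ∀ {a b a' b'}, ρ a b → ρ a' b' → a ∈ Z ∨ a' ∈ Z → a < a' → b < b')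
    {y : α} {z : β} (hyz : ρ y z) (hy : y ∉ Z) :
    (∃ a b, ρ a b ∧ a ∈ Z ∧ (y < a ∧ ∀ x ∈ Z, y < x → a ≤ x) ∧
      (z < b ∧ ∀ w ∈ W, z < w → b ≤ w)) ∨ (∀ x ∈ Z, x ≤ y) ∧ ∀ w ∈ W, w ≤ z := by
  rcases (W ∩ Set.Ioi z).eq_empty_or_nonempty with hempty | hne
  · refine .inr ⟨fun x hx ↦ le_of_not_gt fun hyx ↦ ?_, fun w hw ↦ le_of_not_gt fun hzw ↦ ?_⟩
    · obtain ⟨w, hxw⟩ := hleft x hx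
      exact hempty.subset ⟨(hZW hxw).1 hx, hmono hyz hxw (.inr hx) hyx⟩
    · exact hempty.subset ⟨hw, hzw⟩
  · obtain ⟨b, ⟨hb, hzb⟩, hmin⟩ := (hW.inter_of_left (Set.Ioi z)).exists_minimal hne
    obtain ⟨a, hab⟩ := hright b hb
    have ha : a ∈ Z := (hZW hab).2 hb
    have hya : y < a := by
      rcases lt_trichotomy y a with h | rfl | h
      · exact h
      · exact absurd ha hy
      · exact absurd (hmono hab hyz (.inl ha) h) hzb.not_gt
    refine .inl ⟨a, b, hab, ha, ⟨hya, fun x hx hyx ↦ le_of_not_gt fun hxa ↦ ?_⟩, hzb,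
      fun w hw hzw ↦ le_of_not_gt fun hwb ↦ hwb.not_ge (hmin ⟨hw, hzw⟩ hwb.le)⟩
    obtain ⟨w, hxw⟩ := hleft x hx
    have hwb : w < b := hmono hxw hab (.inl hx) hxa
    exact hwb.not_ge (hmin ⟨(hZW hxw).1 hx, hmono hyz hxw (.inr hx) hyx⟩ hwb.le)

lemma exists_prev_related {α β : Type*} [LinearOrder α] [LinearOrder β] {ρ : α → β → Prop}
    {Z : Set α} {W : Set β} (hW : W.Finite) (hZW : ∀ {a b}, ρ a b → (a ∈ Z ↔ b ∈ W))
    (hleft : ∀ a ∈ Z, ∃ b, ρ a b) (hright : ∀ b ∈ W, ∃ a, ρ a b)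
    (hmono : ∀ {a b a' b'}, ρ a b → ρ a' b' → a ∈ Z ∨ a' ∈ Z → a < a' → b < b')
    {y : α} {z : β} (hyz : ρ y z) (hy : y ∉ Z) :
    (∃ a b, ρ a b ∧ a ∈ Z ∧ (a < y ∧ ∀ x ∈ Z, x < y → x ≤ a) ∧
      (b < z ∧ ∀ w ∈ W, w < z → w ≤ b)) ∨ (∀ x ∈ Z, y ≤ x) ∧ ∀ w ∈ W, z ≤ w :=
  exists_next_related (α := αᵒᵈ) (β := βᵒᵈ) (ρ := ρ) (Z := Z) (W := W) hW hZW hleft hright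
    (fun {a b a' b'} h h' hroot hlt ↦
      hmono (a := a') (b := b') (a' := a) (b' := b) h' h hroot.symm hlt) hyz hy

section RootsOf

variable {R : Type*}

/-- The points at which some nonconstant member of `S` vanishes. -/
def rootsOf [CommRing R] (S : Set R[X]) : Set R :=
  {x | ∃ p ∈ S, 0 < p.natDegree ∧ p.eval x = 0}

lemma finite_rootsOf [CommRing R] [IsDomain R] {S : Set R[X]} (hS : S.Finite) :
    (rootsOf S).Finite := by
  have hroots (p) (_ : p ∈ S) : {x | 0 < p.natDegree ∧ p.eval x = 0}.Finite := by
    by_cases hp : p = 0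
    · simp [hp]
    · exact (finite_setOfPred_isRoot hp).subset fun x hx ↦ hx.2
  refine (hS.biUnion hroots).subset ?_
  rintro x ⟨p, hp, hx⟩
  exact Set.mem_biUnion hp hx

lemma derivative_eval_ne_zero_of_notMem_rootsOf [CommRing R] [IsAddTorsionFree R]
    {S : Set R[X]} {p : R[X]} (hp : 0 < p.natDegree) (hS : derivative p ∈ S) {x : R}
    (hx : x ∉ rootsOf S) : p.derivative.eval x ≠ 0 := by
  intro h0
  rcases (derivative p).natDegree.eq_zero_or_pos with hdeg | hdeg
  · have hconst := eq_C_of_natDegree_eq_zero hdeg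
    have hder : derivative p = 0 := by
      rw [hconst, eval_C] at h0
      rw [hconst, h0, C_0]
    exact hp.ne' (derivative_eq_zero.1 hder)
  · exact hx ⟨_, hS, hdeg, h0⟩

lemma PolynomialIVP.sign_eval_eq_of_forall_notMem_rootsOf [Field R] [LinearOrder R]
    [IsStrictOrderedRing R] (hR : PolynomialIVP R) {S : Set R[X]}
    {l u x y : R} (h : ∀ x ∈ Set.Ioo l u, x ∉ rootsOf S) (hx : x ∈ Set.Ioo l u)
    (hy : y ∈ Set.Ioo l u) {p : R[X]} (hp : p ∈ S) : sign (p.eval x) = sign (p.eval y) := by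
  rcases p.natDegree.eq_zero_or_pos with hdeg | hdeg
  · rw [eq_C_of_natDegree_eq_zero hdeg, eval_C, eval_C]
  · exact sign_eq_sign_of_mul_pos
      (hR.mul_eval_pos Set.ordConnected_Ioo (fun w hw h0 ↦ h w hw ⟨p, hp, hdeg, h0⟩) hx hy)

end RootsOf

lemma sign_eq_left_or_right_of_mul_sub_pos {R : Type*} [CommRing R] [LinearOrder R]
    [IsStrictOrderedRing R] {a b c : R} (h : 0 < (b - a) * (c - b)) (hb : b ≠ 0) :
    sign b = sign a ∨ sign b = sign c := by
  rcases pos_and_pos_or_neg_and_neg_of_mul_pos h with ⟨h₁, h₂⟩ | ⟨h₁, h₂⟩ <;>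
    rcases hb.lt_or_gt with hb | hb
  · exact .inl (by rw [sign_neg hb, sign_neg (by linarith)])
  · exact .inr (by rw [sign_pos hb, sign_pos (by linarith)])
  · exact .inr (by rw [sign_neg hb, sign_neg (by linarith)])
  · exact .inl (by rw [sign_pos hb, sign_pos (by linarith)])

-- The derivative of `p` has no zero in the interval, so `p.eval y` lies strictly between the values
-- of `p` at the endpoints, whose signs `q` shares.
lemma PolynomialIVP.exists_mem_Ioo_sign_eval_eq {R₁ R₂ : Type*} [Field R₁] [LinearOrder R₁]
    [IsStrictOrderedRing R₁] [Field R₂] [LinearOrder R₂] [IsStrictOrderedRing R₂]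
    (hR₁ : PolynomialIVP R₁) (hR₂ : PolynomialIVP R₂) {p : R₁[X]} {q : R₂[X]} {l y u : R₁}
    {l' u' : R₂} (hy : y ∈ Set.Ioo l u) (hlu' : l' < u')
    (hno : ∀ x ∈ Set.Ioo l u, p.derivative.eval x ≠ 0)
    (hl : sign (p.eval l) = sign (q.eval l')) (hu : sign (p.eval u) = sign (q.eval u')) :
    ∃ c ∈ Set.Ioo l' u', sign (q.eval c) = sign (p.eval y) := by
  have hbetween : 0 < (p.eval y - p.eval l) * (p.eval u - p.eval y) := by
    obtain ⟨c₁, hc₁, h₁⟩ := hR₁.exists_eval_sub_eval_eq p hy.1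
    obtain ⟨c₂, hc₂, h₂⟩ := hR₁.exists_eval_sub_eval_eq p hy.2
    rw [h₁, h₂, mul_mul_mul_comm]
    exact mul_pos (hR₁.mul_eval_pos Set.ordConnected_Ioo hno ⟨hc₁.1, hc₁.2.trans hy.2⟩
      ⟨hy.1.trans hc₂.1, hc₂.2⟩) (mul_pos (sub_pos.2 hy.1) (sub_pos.2 hy.2))
  rcases eq_or_ne (p.eval y) 0 with hy0 | hy0
  · have hneg : q.eval l' * q.eval u' < 0 := by
      rw [← sign_eq_neg_one_iff, sign_mul, ← hl, ← hu, ← sign_mul, sign_eq_neg_one_iff]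
      rw [hy0] at hbetween
      linarith
    obtain ⟨c, hc, hc0⟩ := hR₂ q l' u' hlu' hneg
    exact ⟨c, hc, by rw [hc0, hy0, sign_zero, sign_zero]⟩
  · have hne {e : R₁} {e' : R₂} (he : sign (p.eval e) = sign (q.eval e'))
        (hye : sign (p.eval y) = sign (p.eval e)) : q.eval e' ≠ 0 := by
      rwa [← sign_ne_zero, ← he, ← hye, sign_ne_zero]
    rcases sign_eq_left_or_right_of_mul_sub_pos hbetween hy0 with h | h
    · obtain ⟨c, hc, hsign⟩ := hR₂.exists_mem_uIoo_sign_eval_eq hlu'.ne (hne hl h)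
      exact ⟨c, Set.uIoo_of_lt hlu' ▸ hc, by rw [hsign, h, hl]⟩
    · obtain ⟨c, hc, hsign⟩ := hR₂.exists_mem_uIoo_sign_eval_eq hlu'.ne' (hne hu h)
      exact ⟨c, Set.uIoo_of_gt hlu' ▸ hc, by rw [hsign, h, hu]⟩

section HormanderSystem

variable {R₁ R₂ : Type*} [Field R₁] [LinearOrder R₁] [Field R₂] [LinearOrder R₂]

/-- A set of pairs of polynomials over two ordered fields in which the two components of each pair
have the same degree and sign at infinity, and which is closed under differentiation and, up to
positive factors, under taking remainders; this is what Hörmander's proof of the Tarski–Seidenberg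
theorem needs in order to compare the sign patterns realised over the two fields. -/
structure IsHormanderSystem (F : Set (R₁[X] × R₂[X])) : Prop where
  natDegree_eq {f} : f ∈ F → f.1.natDegree = f.2.natDegree
  sign_leadingCoeff {f} : f ∈ F → sign f.1.leadingCoeff = sign f.2.leadingCoeff
  derivative_mem {f} : f ∈ F → 0 < f.1.natDegree → (derivative f.1, derivative f.2) ∈ F
  exists_remainder {f g} : f ∈ F → g ∈ F → 0 < g.1.natDegree → g.1.natDegree ≤ f.1.natDegree →
    ∃ r ∈ F, r.1.natDegree < g.1.natDegree ∧
      (∀ x, g.1.eval x = 0 → sign (f.1.eval x) = sign (r.1.eval x)) ∧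
      ∀ x, g.2.eval x = 0 → sign (f.2.eval x) = sign (r.2.eval x)

/-- The points `y` and `z` realise the same sign pattern on the pairs in `F`. -/
def SameSigns (F : Set (R₁[X] × R₂[X])) (y : R₁) (z : R₂) : Prop :=
  ∀ f ∈ F, sign (f.1.eval y) = sign (f.2.eval z)

namespace IsHormanderSystem

variable {F : Set (R₁[X] × R₂[X])}

lemma preimage_swap (hF : IsHormanderSystem F) : IsHormanderSystem (Prod.swap ⁻¹' F) where
  natDegree_eq {f} hf := (hF.natDegree_eq (f := f.swap) hf).symm
  sign_leadingCoeff {f} hf := (hF.sign_leadingCoeff (f := f.swap) hf).symm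
  derivative_mem {f} hf hdeg := hF.derivative_mem (f := f.swap) hf
    (hdeg.trans_eq (hF.natDegree_eq (f := f.swap) hf).symm)
  exists_remainder {f g} hf hg hdeg hle := by
    have hf' : f.2.natDegree = f.1.natDegree := hF.natDegree_eq (f := f.swap) hf
    have hg' : g.2.natDegree = g.1.natDegree := hF.natDegree_eq (f := g.swap) hg
    obtain ⟨r, hr, hrg, hr₁, hr₂⟩ := hF.exists_remainder (f := f.swap) (g := g.swap) hf hg
      (hdeg.trans_eq hg'.symm) (hg'.trans_le (hle.trans_eq hf'.symm))
    exact ⟨r.swap, hr, (hF.natDegree_eq hr).symm.trans_lt (hrg.trans_eq hg'), hr₂, hr₁⟩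

lemma mem_rootsOf_iff (hF : IsHormanderSystem F) {y : R₁} {z : R₂} (h : SameSigns F y z) :
    y ∈ rootsOf (Prod.fst '' F) ↔ z ∈ rootsOf (Prod.snd '' F) := by
  constructor
  · rintro ⟨_, ⟨f, hf, rfl⟩, hdeg, h0⟩
    refine ⟨_, ⟨f, hf, rfl⟩, hF.natDegree_eq hf ▸ hdeg, ?_⟩
    rwa [← sign_eq_zero_iff, ← h f hf, sign_eq_zero_iff]
  · rintro ⟨_, ⟨f, hf, rfl⟩, hdeg, h0⟩
    refine ⟨_, ⟨f, hf, rfl⟩, hF.natDegree_eq hf ▸ hdeg, ?_⟩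
    rwa [← sign_eq_zero_iff, h f hf, sign_eq_zero_iff]

variable [IsStrictOrderedRing R₁] [IsStrictOrderedRing R₂]
  (hR₁ : PolynomialIVP R₁) (hR₂ : PolynomialIVP R₂)
include hR₁ hR₂

-- By induction on the degree the derivatives have one and the same sign on both intervals, so both
-- components are monotone in the same direction, while their endpoint signs are interchanged.
lemma sign_eval_eq_of_le_of_le (hF : IsHormanderSystem F) {y y' : R₁} {z z' : R₂}
    (h : SameSigns F y z) (h' : SameSigns F y' z') (hy : y ≤ y') (hz : z' ≤ z)
    {f : R₁[X] × R₂[X]} (hf : f ∈ F) {x : R₁} (hx : x ∈ Set.Icc y y') {w : R₂}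
    (hw : w ∈ Set.Icc z' z) : sign (f.1.eval x) = sign (f.2.eval w) := by
  induction hn : f.1.natDegree using Nat.strong_induction_on generalizing f x w with
  | _ n ih =>
  rcases n.eq_zero_or_pos with rfl | hpos
  · have hf₁ := eq_C_of_natDegree_eq_zero hn
    have hf₂ := eq_C_of_natDegree_eq_zero (hF.natDegree_eq hf ▸ hn)
    have := h f hf
    rw [hf₁, hf₂, eval_C, eval_C] at this ⊢
    exact this
  have hder {x : R₁} (hx : x ∈ Set.Icc y y') {w : R₂} (hw : w ∈ Set.Icc z' z) :
      sign (f.1.derivative.eval x) = sign (f.2.derivative.eval w) :=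
    ih _ (hn ▸ natDegree_derivative_lt (by lia)) (hF.derivative_mem hf (by lia)) hx hw rfl
  have hy₀ : y ∈ Set.Icc y y' := Set.left_mem_Icc.2 hy
  have hz₀ : z ∈ Set.Icc z' z := Set.right_mem_Icc.2 hz
  have hyx : Set.Icc y x ⊆ Set.Icc y y' := Set.Icc_subset_Icc_right hx.2
  have hxy : Set.Icc x y' ⊆ Set.Icc y y' := Set.Icc_subset_Icc_left hx.1
  have hzw : Set.Icc z' w ⊆ Set.Icc z' z := Set.Icc_subset_Icc_right hw.2
  have hwz : Set.Icc w z ⊆ Set.Icc z' z := Set.Icc_subset_Icc_left hw.1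
  rcases le_total 0 (f.1.derivative.eval y) with h0 | h0
  · have h₂ (w) (hw : w ∈ Set.Icc z' z) : 0 ≤ f.2.derivative.eval w := by
      rwa [← sign_nonneg_iff, ← hder hy₀ hw, sign_nonneg_iff]
    have h₁ (x) (hx : x ∈ Set.Icc y y') : 0 ≤ f.1.derivative.eval x := by
      rw [← sign_nonneg_iff, hder hx hz₀, sign_nonneg_iff]
      exact h₂ z hz₀
    have hyx := sign.monotone (hR₁.eval_le_eval hx.1 fun t ht ↦ h₁ t (hyx ht))
    have hxy := sign.monotone (hR₁.eval_le_eval hx.2 fun t ht ↦ h₁ t (hxy ht))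
    have hzw := sign.monotone (hR₂.eval_le_eval hw.1 fun t ht ↦ h₂ t (hzw ht))
    have hwz := sign.monotone (hR₂.eval_le_eval hw.2 fun t ht ↦ h₂ t (hwz ht))
    rw [← h f hf] at hwz
    rw [h' f hf] at hxy
    exact le_antisymm (hxy.trans hzw) (hwz.trans hyx)
  · have h₂ (w) (hw : w ∈ Set.Icc z' z) : f.2.derivative.eval w ≤ 0 := by
      rwa [← sign_nonpos_iff, ← hder hy₀ hw, sign_nonpos_iff]
    have h₁ (x) (hx : x ∈ Set.Icc y y') : f.1.derivative.eval x ≤ 0 := by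
      rw [← sign_nonpos_iff, hder hx hz₀, sign_nonpos_iff]
      exact h₂ z hz₀
    have hyx := sign.monotone (hR₁.eval_le_eval_of_nonpos hx.1 fun t ht ↦ h₁ t (hyx ht))
    have hxy := sign.monotone (hR₁.eval_le_eval_of_nonpos hx.2 fun t ht ↦ h₁ t (hxy ht))
    have hzw := sign.monotone (hR₂.eval_le_eval_of_nonpos hw.1 fun t ht ↦ h₂ t (hzw ht))
    have hwz := sign.monotone (hR₂.eval_le_eval_of_nonpos hw.2 fun t ht ↦ h₂ t (hwz ht))
    rw [← h f hf] at hwz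
    rw [h' f hf] at hxy
    exact le_antisymm (hyx.trans hwz) (hzw.trans hxy)

lemma lt_of_mem_rootsOf (hF : IsHormanderSystem F) {y y' : R₁} {z z' : R₂}
    (h : SameSigns F y z) (h' : SameSigns F y' z')
    (hroot : y ∈ rootsOf (Prod.fst '' F) ∨ y' ∈ rootsOf (Prod.fst '' F)) (hy : y < y') :
    z < z' := by
  by_contra! hz
  have hconst {f} (hf : f ∈ F) {x} (hx : x ∈ Set.Icc y y') :
      sign (f.1.eval x) = sign (f.2.eval z) :=
    hF.sign_eval_eq_of_le_of_le hR₁ hR₂ h h' hy.le hz hf hx (Set.right_mem_Icc.2 hz)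
  obtain ⟨f, hf, hdeg, x₀, hx₀, h0⟩ :
      ∃ f ∈ F, 0 < f.1.natDegree ∧ ∃ x ∈ Set.Icc y y', f.1.eval x = 0 := by
    rcases hroot with ⟨_, ⟨f, hf, rfl⟩, hdeg, h0⟩ | ⟨_, ⟨f, hf, rfl⟩, hdeg, h0⟩
    · exact ⟨f, hf, hdeg, y, Set.left_mem_Icc.2 hy.le, h0⟩
    · exact ⟨f, hf, hdeg, y', Set.right_mem_Icc.2 hy.le, h0⟩
  have hzero : f.1 = 0 := eq_zero_of_infinite_isRoot _ <|
    (Set.Icc_infinite hy).mono fun x hx ↦ by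
      change f.1.eval x = 0
      rw [← sign_eq_zero_iff, hconst hf hx, ← hconst hf hx₀, h0, sign_zero]
  simp [hzero] at hdeg

end IsHormanderSystem

end HormanderSystem

section HormanderSystem

variable {R₁ R₂ : Type*} [Field R₁] [LinearOrder R₁] [Field R₂] [LinearOrder R₂]

lemma SameSigns.preimage_swap {F : Set (R₁[X] × R₂[X])} {y : R₁} {z : R₂} (h : SameSigns F y z) :
    SameSigns (Prod.swap ⁻¹' F) z y :=
  fun f hf ↦ (h f.swap hf).symm

namespace IsHormanderSystem

variable {F : Set (R₁[X] × R₂[X])} {f : R₁[X] × R₂[X]}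

section TopDegree

variable (hF : IsHormanderSystem (insert f F)) (hmax : ∀ g ∈ F, g.1.natDegree ≤ f.1.natDegree)
include hF hmax

lemma of_insert : IsHormanderSystem F where
  natDegree_eq hg := hF.natDegree_eq (.inr hg)
  sign_leadingCoeff hg := hF.sign_leadingCoeff (.inr hg)
  derivative_mem {g} hg hdeg := by
    refine (hF.derivative_mem (.inr hg) hdeg).resolve_left fun heq ↦ ?_
    have hlt := natDegree_derivative_lt hdeg.ne'
    rw [← heq] at hmax
    exact (hmax g hg).not_gt hlt
  exists_remainder {g₁ g₂} hg₁ hg₂ hdeg hle := by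
    obtain ⟨r, rfl | hr, hlt, hsign⟩ := hF.exists_remainder (.inr hg₁) (.inr hg₂) hdeg hle
    · exact absurd (hmax g₂ hg₂) hlt.not_ge
    · exact ⟨r, hr, hlt, hsign⟩

lemma sign_eval_eq_of_mem_rootsOf {y : R₁} {z : R₂} (h : SameSigns F y z)
    (hy : y ∈ rootsOf (Prod.fst '' F)) : sign (f.1.eval y) = sign (f.2.eval z) := by
  obtain ⟨_, ⟨g, hg, rfl⟩, hdeg, hy0⟩ := hy
  have hz0 : g.2.eval z = 0 := by rwa [← sign_eq_zero_iff, ← h g hg, sign_eq_zero_iff]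
  obtain ⟨r, hr, hlt, hr₁, hr₂⟩ :=
    hF.exists_remainder (Set.mem_insert f F) (.inr hg) hdeg (hmax g hg)
  have hrF : r ∈ F := hr.resolve_left fun heq ↦ ((heq ▸ hmax) g hg).not_gt hlt
  rw [hr₁ y hy0, hr₂ z hz0, h r hrF]

variable [IsStrictOrderedRing R₁] [IsStrictOrderedRing R₂]
  (hR₁ : PolynomialIVP R₁) (hR₂ : PolynomialIVP R₂) (hfin : F.Finite)
  (hleft : ∀ y, ∃ z, SameSigns F y z) (hright : ∀ z, ∃ y, SameSigns F y z)
include hR₁ hR₂ hfin hleft hright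

lemma exists_gt_sign_eval_eq {y : R₁} {z : R₂} (h : SameSigns F y z)
    (hy : y ∉ rootsOf (Prod.fst '' F)) :
    ∃ u v, (y < u ∧ ∀ x ∈ rootsOf (Prod.fst '' F), y < x → u ≤ x) ∧
      (z < v ∧ ∀ w ∈ rootsOf (Prod.snd '' F), z < w → v ≤ w) ∧
      sign (f.1.eval u) = sign (f.2.eval v) := by
  have hF' := hF.of_insert hmax
  rcases exists_next_related (finite_rootsOf (hfin.image Prod.snd)) hF'.mem_rootsOf_iff
      (fun a _ ↦ hleft a) (fun b _ ↦ hright b) (hF'.lt_of_mem_rootsOf hR₁ hR₂) h hy with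
    ⟨u, v, huv, hu, hyu, hzv⟩ | ⟨hZ, hW⟩
  · exact ⟨u, v, hyu, hzv, hF.sign_eval_eq_of_mem_rootsOf hmax huv hu⟩
  · obtain ⟨u, hu, hyu⟩ := ((eventually_atTop_sign_eval f.1).and (eventually_gt_atTop y)).exists
    obtain ⟨v, hv, hzv⟩ := ((eventually_atTop_sign_eval f.2).and (eventually_gt_atTop z)).exists
    exact ⟨u, v, ⟨hyu, fun x hx hyx ↦ absurd (hZ x hx) hyx.not_ge⟩,
      ⟨hzv, fun w hw hzw ↦ absurd (hW w hw) hzw.not_ge⟩,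
      by rw [hu, hv, hF.sign_leadingCoeff (Set.mem_insert f F)]⟩

lemma exists_lt_sign_eval_eq {y : R₁} {z : R₂} (h : SameSigns F y z)
    (hy : y ∉ rootsOf (Prod.fst '' F)) :
    ∃ u v, (u < y ∧ ∀ x ∈ rootsOf (Prod.fst '' F), x < y → x ≤ u) ∧
      (v < z ∧ ∀ w ∈ rootsOf (Prod.snd '' F), w < z → w ≤ v) ∧
      sign (f.1.eval u) = sign (f.2.eval v) := by
  have hF' := hF.of_insert hmax
  rcases exists_prev_related (finite_rootsOf (hfin.image Prod.snd)) hF'.mem_rootsOf_iff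
      (fun a _ ↦ hleft a) (fun b _ ↦ hright b) (hF'.lt_of_mem_rootsOf hR₁ hR₂) h hy with
    ⟨u, v, huv, hu, hyu, hzv⟩ | ⟨hZ, hW⟩
  · exact ⟨u, v, hyu, hzv, hF.sign_eval_eq_of_mem_rootsOf hmax huv hu⟩
  · obtain ⟨u, hu, hyu⟩ := ((eventually_atBot_sign_eval f.1).and (eventually_lt_atBot y)).exists
    obtain ⟨v, hv, hzv⟩ := ((eventually_atBot_sign_eval f.2).and (eventually_lt_atBot z)).exists
    exact ⟨u, v, ⟨hyu, fun x hx hyx ↦ absurd hyx (hZ x hx).not_gt⟩,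
      ⟨hzv, fun w hw hzw ↦ absurd hzw (hW w hw).not_gt⟩,
      by rw [hu, hv, hF.sign_leadingCoeff (Set.mem_insert f F),
        hF.natDegree_eq (Set.mem_insert f F)]⟩

lemma exists_sameSigns_insert (y : R₁) : ∃ z, SameSigns (insert f F) y z := by
  obtain ⟨z, hyz⟩ := hleft y
  have hinsert {z} (h : SameSigns F y z) (hf : sign (f.1.eval y) = sign (f.2.eval z)) :
      SameSigns (insert f F) y z :=
    fun g hg ↦ hg.elim (fun h ↦ h ▸ hf) (h g)
  have hfF : f ∈ insert f F := Set.mem_insert f F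
  rcases f.1.natDegree.eq_zero_or_pos with hdeg | hdeg
  · have hf₁ := eq_C_of_natDegree_eq_zero hdeg
    have hf₂ := eq_C_of_natDegree_eq_zero (hF.natDegree_eq hfF ▸ hdeg)
    have hlc := hF.sign_leadingCoeff hfF
    rw [hf₁, hf₂, leadingCoeff_C, leadingCoeff_C] at hlc
    exact ⟨z, hinsert hyz (by rw [hf₁, hf₂, eval_C, eval_C, hlc])⟩
  by_cases hy : y ∈ rootsOf (Prod.fst '' F)
  · exact ⟨z, hinsert hyz (hF.sign_eval_eq_of_mem_rootsOf hmax hyz hy)⟩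
  have hz : z ∉ rootsOf (Prod.snd '' F) := fun hz ↦
    hy (((hF.of_insert hmax).mem_rootsOf_iff hyz).2 hz)
  obtain ⟨u, u', ⟨hyu, hu⟩, ⟨hzu', hu'⟩, hsign_u⟩ :=
    hF.exists_gt_sign_eval_eq hmax hR₁ hR₂ hfin hleft hright hyz hy
  obtain ⟨l, l', ⟨hly, hl⟩, ⟨hlz', hl'⟩, hsign_l⟩ :=
    hF.exists_lt_sign_eval_eq hmax hR₁ hR₂ hfin hleft hright hyz hy
  have hno : ∀ x ∈ Set.Ioo l u, x ∉ rootsOf (Prod.fst '' F) := fun x hx hroot ↦ by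
    rcases lt_trichotomy x y with h | rfl | h
    exacts [(hl x hroot h).not_gt hx.1, hy hroot, (hu x hroot h).not_gt hx.2]
  have hno' : ∀ w ∈ Set.Ioo l' u', w ∉ rootsOf (Prod.snd '' F) := fun w hw hroot ↦ by
    rcases lt_trichotomy w z with h | rfl | h
    exacts [(hl' w hroot h).not_gt hw.1, hz hroot, (hu' w hroot h).not_gt hw.2]
  have hder : (derivative f.1, derivative f.2) ∈ F :=
    (hF.derivative_mem hfF hdeg).resolve_left fun heq ↦
      (natDegree_derivative_lt hdeg.ne').ne (congr_arg (natDegree ∘ Prod.fst) heq)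
  obtain ⟨c, hc, hsign⟩ := hR₁.exists_mem_Ioo_sign_eval_eq hR₂ ⟨hly, hyu⟩ (hlz'.trans hzu')
    (fun x hx ↦ derivative_eval_ne_zero_of_notMem_rootsOf hdeg
      (Set.mem_image_of_mem Prod.fst hder) (hno x hx)) hsign_l hsign_u
  refine ⟨c, hinsert (fun g hg ↦ ?_) hsign.symm⟩
  rw [hyz g hg]
  exact hR₂.sign_eval_eq_of_forall_notMem_rootsOf hno' ⟨hlz', hzu'⟩ hc (Set.mem_image_of_mem _ hg)

end TopDegree
theorem exists_sameSigns [IsStrictOrderedRing R₁] [IsStrictOrderedRing R₂]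
    (hR₁ : PolynomialIVP R₁) (hR₂ : PolynomialIVP R₂) (hF : IsHormanderSystem F)
    (hfin : F.Finite) (y : R₁) : ∃ z, SameSigns F y z := by
  classical
  obtain ⟨F, rfl⟩ := hfin.exists_finset_coe
  suffices h : (∀ y, ∃ z, SameSigns (F : Set (R₁[X] × R₂[X])) y z) ∧
      ∀ z, ∃ y, SameSigns (F : Set (R₁[X] × R₂[X])) y z from h.1 y
  induction F using Finset.induction_on_max_value (fun f : R₁[X] × R₂[X] ↦ f.1.natDegree) with
  | empty => exact ⟨fun _ ↦ ⟨0, by simp [SameSigns]⟩, fun _ ↦ ⟨0, by simp [SameSigns]⟩⟩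
  | insert f F _ hmax ih =>
    rw [Finset.coe_insert] at hF ⊢
    obtain ⟨hleft, hright⟩ := ih (hF.of_insert hmax) F.finite_toSet
    refine ⟨hF.exists_sameSigns_insert hmax hR₁ hR₂ F.finite_toSet hleft hright, fun z ↦ ?_⟩
    have hswap := hF.preimage_swap
    rw [← Set.image_swap_eq_preimage_swap, Set.image_insert_eq, Set.image_swap_eq_preimage_swap]
      at hswap
    have hmax' : ∀ g ∈ Prod.swap ⁻¹' (F : Set (R₁[X] × R₂[X])),
        g.1.natDegree ≤ f.swap.1.natDegree := fun g hg ↦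
      (hF.natDegree_eq (f := g.swap) (.inr hg)).symm.trans_le <|
        (hmax g.swap hg).trans_eq (hF.natDegree_eq (Set.mem_insert f F))
    obtain ⟨y, hy⟩ := hswap.exists_sameSigns_insert hmax' hR₂ hR₁
      (F.finite_toSet.preimage Prod.swap_injective.injOn)
      (fun z ↦ (hright z).imp fun _ h ↦ h.preimage_swap)
      (fun y ↦ (hleft y).imp fun _ h ↦ h.preimage_swap) z
    exact ⟨y, fun g hg ↦ (hy g.swap (by simpa using hg)).symm⟩

end IsHormanderSystem

end HormanderSystem

section Transfer

lemma exists_finite_closed_of_rank_lt {α : Type*} (rank : α → ℕ) (op : α → α → Set α)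
    (hfin : ∀ f g, (op f g).Finite)
    (hrank : ∀ f g, ∀ u ∈ op f g, rank u < rank f ∧ rank u < rank g) {s : Set α} (hs : s.Finite) :
    ∃ t ⊇ s, t.Finite ∧ ∀ f ∈ t, ∀ g ∈ t, op f g ⊆ t := by
  obtain ⟨N, hN⟩ := (hs.image rank).bddAbove
  suffices h : ∀ m ≤ N, ∃ t ⊇ s, t.Finite ∧ ∀ f ∈ t, ∀ g ∈ t, ∀ u ∈ op f g, m ≤ rank u → u ∈ t by
    obtain ⟨t, hst, ht, hop⟩ := h 0 N.zero_le
    exact ⟨t, hst, ht, fun f hf g hg u hu ↦ hop f hf g hg u hu (Nat.zero_le _)⟩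
  intro m hm
  induction hm using Nat.decreasingInduction with
  | self =>
    refine ⟨s, subset_rfl, hs, fun f hf g _ u hu hle ↦ ?_⟩
    exact absurd (hN (Set.mem_image_of_mem rank hf)) (hle.trans_lt (hrank f g u hu).1).not_ge
  | of_succ m _ ih =>
    obtain ⟨t, hst, ht, hop⟩ := ih
    have hmem {f} (hf : f ∈ t ∪ ⋃ g ∈ t, ⋃ g' ∈ t, op g g') (hlt : m < rank f) : f ∈ t := by
      rcases hf with hf | hf
      · exact hf
      · simp only [Set.mem_iUnion] at hf
        obtain ⟨g, hg, g', hg', hf⟩ := hf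
        exact hop g hg g' hg' f hf hlt
    refine ⟨t ∪ ⋃ g ∈ t, ⋃ g' ∈ t, op g g', hst.trans Set.subset_union_left,
      ht.union (ht.biUnion fun g _ ↦ ht.biUnion fun g' _ ↦ hfin g g'), fun f hf g hg u hu hle ↦ ?_⟩
    have hlt := hrank f g u hu
    exact .inr (Set.mem_biUnion (hmem hf (hle.trans_lt hlt.1))
      (Set.mem_biUnion (hmem hg (hle.trans_lt hlt.2)) hu))

variable {D : Type*} [CommRing D]

-- An even power of the leading coefficient keeps the sign of `f` at the zeros of `g`.
lemma exists_pseudoRemainder (f : D[X]) {g : D[X]} (hg : 0 < g.natDegree) :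
    ∃ r : D[X], r.natDegree < g.natDegree ∧
      ∃ (k : ℕ) (q : D[X]), C (g.leadingCoeff ^ (2 * k)) * f = q * g + r := by
  induction hn : f.natDegree using Nat.strong_induction_on generalizing f with
  | _ n ih =>
  rcases lt_or_ge f.natDegree g.natDegree with hlt | hle
  · exact ⟨f, hlt, 0, 0, by simp⟩
  obtain ⟨r, hr, k, q, h⟩ := ih _
    (hn ▸ natDegree_cancelLeads_lt_of_natDegree_le_natDegree hle (hg.trans_le hle)) _ rfl
  refine ⟨C g.leadingCoeff * r, (natDegree_C_mul_le _ _).trans_lt hr, k + 1,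
    C g.leadingCoeff * (q + C (g.leadingCoeff ^ (2 * k)) *
      (C f.leadingCoeff * X ^ (f.natDegree - g.natDegree))), ?_⟩
  rw [cancelLeads, Nat.sub_eq_zero_of_le hle, pow_zero, mul_one] at h
  simp only [C_pow] at h ⊢
  linear_combination C g.leadingCoeff * h

lemma sign_eval_map_eq_of_pseudoRemainder {R : Type*} [Field R] [LinearOrder R]
    [IsStrictOrderedRing R] {φ : D →+* R} {f g q r : D[X]} {k : ℕ}
    (h : C (g.leadingCoeff ^ (2 * k)) * f = q * g + r) (hg : φ g.leadingCoeff ≠ 0) {x : R}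
    (hx : (g.map φ).eval x = 0) : sign ((f.map φ).eval x) = sign ((r.map φ).eval x) := by
  have heval := congr_arg (fun p ↦ (p.map φ).eval x) h
  simp only [Polynomial.map_mul, Polynomial.map_add, map_C, eval_mul, eval_add, eval_C, hx,
    mul_zero, zero_add] at heval
  have hpos : 0 < φ (g.leadingCoeff ^ (2 * k)) := by
    rw [map_pow, pow_mul]
    positivity
  rw [← heval, sign_mul, sign_pos hpos, one_mul]

lemma leadingCoeff_map_of_natDegree_map_eq {R : Type*} [CommRing R] {φ : D →+* R} {f : D[X]}
    (h : (f.map φ).natDegree = f.natDegree) : (f.map φ).leadingCoeff = φ f.leadingCoeff := by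
  rw [leadingCoeff, h, coeff_map, coeff_natDegree]

lemma map_eraseLead_of_leadingCoeff_eq_zero {R : Type*} [CommRing R] {φ : D →+* R} {f : D[X]}
    (h : φ f.leadingCoeff = 0) : f.eraseLead.map φ = f.map φ := by
  simp [← self_sub_C_mul_X_pow, h]

/-- A set of polynomials closed under the operations needed to build a Hörmander system out of its
images in two ordered fields. Deleting leading terms accounts for the leading coefficients that
these fields send to zero. -/
structure IsPseudoClosed (t : Set D[X]) : Prop where
  derivative_mem {f} : f ∈ t → 0 < f.natDegree → derivative f ∈ t
  eraseLead_mem {f} : f ∈ t → 0 < f.natDegree → f.eraseLead ∈ t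
  exists_pseudoRemainder {f g} : f ∈ t → g ∈ t → 0 < g.natDegree → g.natDegree ≤ f.natDegree →
    ∃ r ∈ t, r.natDegree < g.natDegree ∧
      ∃ (k : ℕ) (q : D[X]), C (g.leadingCoeff ^ (2 * k)) * f = q * g + r

lemma exists_finite_isPseudoClosed {s : Set D[X]} (hs : s.Finite) :
    ∃ t ⊇ s, t.Finite ∧ IsPseudoClosed t := by
  choose! rem hrem hdiv using fun f g : D[X] ↦ exists_pseudoRemainder f (g := g)
  obtain ⟨t, hst, ht, hop⟩ := exists_finite_closed_of_rank_lt natDegree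
    (fun f g ↦ {u | (0 < g.natDegree ∧ g.natDegree ≤ f.natDegree) ∧
      u ∈ ({derivative g, eraseLead g, rem f g} : Set D[X])})
    (fun f g ↦ (Set.toFinite {derivative g, eraseLead g, rem f g}).subset fun _ hu ↦ hu.2)
    (by
      rintro f g u ⟨⟨hg, hgf⟩, hu⟩
      suffices h : u.natDegree < g.natDegree from ⟨h.trans_le hgf, h⟩
      rcases hu with rfl | rfl | rfl
      exacts [natDegree_derivative_lt hg.ne', (eraseLead_natDegree_le g).trans_lt (by lia),
        hrem f g hg]) hs
  exact ⟨t, hst, ht, fun hf h ↦ hop _ hf _ hf ⟨⟨h, le_rfl⟩, .inl rfl⟩,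
    fun hf h ↦ hop _ hf _ hf ⟨⟨h, le_rfl⟩, .inr (.inl rfl)⟩,
    fun hf hg h hle ↦ ⟨_, hop _ hf _ hg ⟨⟨h, hle⟩, .inr (.inr rfl)⟩, hrem _ _ h, hdiv _ _ h⟩⟩

variable {R₁ R₂ : Type*} [Field R₁] [LinearOrder R₁] [Field R₂] [LinearOrder R₂]
  {φ₁ : D →+* R₁} {φ₂ : D →+* R₂}

namespace IsPseudoClosed

variable {t : Set D[X]}

lemma exists_natDegree_map_eq (ht : IsPseudoClosed t)
    (hsign : ∀ f ∈ t, sign (φ₁ f.leadingCoeff) = sign (φ₂ f.leadingCoeff)) {f : D[X]} (hf : f ∈ t) :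
    ∃ g ∈ t, g.map φ₁ = f.map φ₁ ∧ g.map φ₂ = f.map φ₂ ∧
      (g.map φ₁).natDegree = g.natDegree ∧ (g.map φ₂).natDegree = g.natDegree := by
  induction hn : f.natDegree using Nat.strong_induction_on generalizing f with
  | _ n ih =>
  rcases f.natDegree.eq_zero_or_pos with hdeg | hdeg
  · exact ⟨f, hf, rfl, rfl, natDegree_map_le.antisymm (hdeg.trans_le zero_le),
      natDegree_map_le.antisymm (hdeg.trans_le zero_le)⟩
  by_cases hlc : φ₁ f.leadingCoeff = 0
  · have hlc₂ : φ₂ f.leadingCoeff = 0 := by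
      rw [← sign_eq_zero_iff, ← hsign f hf, hlc, sign_zero]
    have hlt : f.eraseLead.natDegree < n := (eraseLead_natDegree_le f).trans_lt (by lia)
    obtain ⟨g, hg, h₁, h₂, hnat⟩ := ih _ hlt (ht.eraseLead_mem hf hdeg) rfl
    exact ⟨g, hg, h₁.trans (map_eraseLead_of_leadingCoeff_eq_zero hlc),
      h₂.trans (map_eraseLead_of_leadingCoeff_eq_zero hlc₂), hnat⟩
  · have hlc₂ : φ₂ f.leadingCoeff ≠ 0 := by
      rwa [← sign_ne_zero, ← hsign f hf, sign_ne_zero]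
    exact ⟨f, hf, rfl, rfl, natDegree_map_of_leadingCoeff_ne_zero φ₁ hlc,
      natDegree_map_of_leadingCoeff_ne_zero φ₂ hlc₂⟩

variable [IsStrictOrderedRing R₁] [IsStrictOrderedRing R₂]

lemma isHormanderSystem (ht : IsPseudoClosed t)
    (hsign : ∀ f ∈ t, sign (φ₁ f.leadingCoeff) = sign (φ₂ f.leadingCoeff)) :
    IsHormanderSystem ((fun f : D[X] ↦ (f.map φ₁, f.map φ₂)) '' t) := by
  have hrep {p} (hp : p ∈ (fun f : D[X] ↦ (f.map φ₁, f.map φ₂)) '' t) :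
      ∃ f ∈ t, (f.map φ₁, f.map φ₂) = p ∧ (f.map φ₁).natDegree = f.natDegree ∧
        (f.map φ₂).natDegree = f.natDegree := by
    obtain ⟨f, hf, rfl⟩ := hp
    obtain ⟨g, hg, h₁, h₂, hnat⟩ := ht.exists_natDegree_map_eq hsign hf
    exact ⟨g, hg, Prod.ext h₁ h₂, hnat⟩
  constructor
  · intro p hp
    obtain ⟨f, -, rfl, hf₁, hf₂⟩ := hrep hp
    exact hf₁.trans hf₂.symm
  · intro p hp
    obtain ⟨f, hf, rfl, hf₁, hf₂⟩ := hrep hp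
    rw [leadingCoeff_map_of_natDegree_map_eq hf₁, leadingCoeff_map_of_natDegree_map_eq hf₂,
      hsign f hf]
  · intro p hp hdeg
    obtain ⟨f, hf, rfl, hf₁, -⟩ := hrep hp
    exact ⟨_, ht.derivative_mem hf (hf₁ ▸ hdeg),
      Prod.ext (derivative_map f φ₁).symm (derivative_map f φ₂).symm⟩
  · intro p p' hp hp' hdeg hle
    obtain ⟨f, hf, rfl, hf₁, -⟩ := hrep hp
    obtain ⟨g, hg, rfl, hg₁, hg₂⟩ := hrep hp'
    simp only [hf₁, hg₁] at hdeg hle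
    obtain ⟨r, hr, hlt, k, q, h⟩ := ht.exists_pseudoRemainder hf hg hdeg hle
    refine ⟨_, Set.mem_image_of_mem _ hr, natDegree_map_le.trans_lt (hlt.trans_eq hg₁.symm),
      fun x hx ↦ sign_eval_map_eq_of_pseudoRemainder h ?_ hx,
      fun x hx ↦ sign_eval_map_eq_of_pseudoRemainder h ?_ hx⟩
    · rw [← leadingCoeff_map_of_natDegree_map_eq hg₁]
      exact leadingCoeff_ne_zero.2 (ne_zero_of_natDegree_gt (hdeg.trans_eq hg₁.symm))
    · rw [← leadingCoeff_map_of_natDegree_map_eq hg₂]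
      exact leadingCoeff_ne_zero.2 (ne_zero_of_natDegree_gt (hdeg.trans_eq hg₂.symm))

end IsPseudoClosed

variable [IsStrictOrderedRing R₁] [IsStrictOrderedRing R₂]

lemma eval₂Hom_eq_eval_map_finSuccEquiv {K R : Type*} [CommRing K] [CommRing R] (ι : K →+* R)
    {n : ℕ} (a : Fin (n + 1) → R) (p : MvPolynomial (Fin (n + 1)) K) :
    MvPolynomial.eval₂Hom ι a p =
      ((MvPolynomial.finSuccEquiv K n p).map
        (MvPolynomial.eval₂Hom ι (Fin.tail a))).eval (a 0) := by
  induction p using MvPolynomial.induction_on with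
  | C c => simp [MvPolynomial.finSuccEquiv_apply]
  | add p q hp hq => simp only [map_add, Polynomial.map_add, eval_add, hp, hq]
  | mul_X p i hp =>
    rw [map_mul, hp, map_mul, Polynomial.map_mul, eval_mul]
    cases i using Fin.cases with
    | zero => simp [MvPolynomial.finSuccEquiv_X_zero]
    | succ j => simp [MvPolynomial.finSuccEquiv_X_succ, Fin.tail]

/-- The **transfer principle** for fields with the intermediate value property for polynomials. -/
theorem exists_sign_eval₂Hom_eq (hR₁ : PolynomialIVP R₁) (hR₂ : PolynomialIVP R₂) {K : Type*}
    [CommRing K] {ι₁ : K →+* R₁} {ι₂ : K →+* R₂} (hι : ∀ x, sign (ι₁ x) = sign (ι₂ x)) {n : ℕ}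
    {G : Set (MvPolynomial (Fin n) K)} (hG : G.Finite) (a : Fin n → R₁) :
    ∃ b : Fin n → R₂, ∀ g ∈ G,
      sign (MvPolynomial.eval₂Hom ι₁ a g) = sign (MvPolynomial.eval₂Hom ι₂ b g) := by
  induction n with
  | zero =>
    refine ⟨Fin.elim0, fun g _ ↦ ?_⟩
    rw [MvPolynomial.eq_C_of_isEmpty g, MvPolynomial.eval₂Hom_C, MvPolynomial.eval₂Hom_C, hι]
  | succ n ih =>
    obtain ⟨t, hGt, ht, hclosed⟩ :=
      exists_finite_isPseudoClosed (hG.image (MvPolynomial.finSuccEquiv K n))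
    obtain ⟨b, hb⟩ := ih (ht.image leadingCoeff) (Fin.tail a)
    have hsys := hclosed.isHormanderSystem fun f hf ↦ hb _ (Set.mem_image_of_mem leadingCoeff hf)
    obtain ⟨z, hz⟩ := hsys.exists_sameSigns hR₁ hR₂ (ht.image _) (a 0)
    refine ⟨Fin.cons z b, fun g hg ↦ ?_⟩
    rw [eval₂Hom_eq_eval_map_finSuccEquiv, eval₂Hom_eq_eval_map_finSuccEquiv, Fin.tail_cons,
      Fin.cons_zero]
    exact hz _ (Set.mem_image_of_mem _ (hGt (Set.mem_image_of_mem _ hg)))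

end Transfer

end RationalMoment

/-! ### Positive functionals on finitely generated algebras -/

namespace RationalMoment

open scoped ENNReal NNReal

section Positivstellensatz

variable {B : Type*} [CommRing B] [Algebra ℝ B]

/-- The characters of `B` that are nonnegative on `S`: the real points of the semialgebraic set
`{S ≥ 0}` in the variety of `B`. -/
def nonnegCharacters (S : Set B) : Set (B →ₐ[ℝ] ℝ) := {χ | ∀ s ∈ S, 0 ≤ χ s}

lemma sign_map_real {R : Type*} [Field R] [LinearOrder R] [IsStrictOrderedRing R] (ι : ℝ →+* R)
    (x : ℝ) : SignType.sign (ι x) = SignType.sign x :=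
  ((ringHom_monotone (fun _ hr ↦ ⟨_, (Real.mul_self_sqrt hr).symm⟩) ι).strictMono_of_injective
    ι.injective).sign_comp x

lemma exists_algHom_sign_eq [Algebra.FiniteType ℝ B] {R : Type*} [Field R] [LinearOrder R]
    [IsStrictOrderedRing R] (hR : PolynomialIVP R) (φ : B →+* R) {S : Set B} (hS : S.Finite) :
    ∃ χ : B →ₐ[ℝ] ℝ, ∀ s ∈ S, SignType.sign (χ s) = SignType.sign (φ s) := by
  obtain ⟨n, π, hπ⟩ :=
    Algebra.FiniteType.iff_quotient_mvPolynomial''.1 (inferInstance : Algebra.FiniteType ℝ B)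
  obtain ⟨J, hJ⟩ := IsNoetherian.noetherian (RingHom.ker π.toRingHom)
  have hφ : MvPolynomial.eval₂Hom (φ.comp (algebraMap ℝ B)) (fun i ↦ φ (π (.X i))) =
      φ.comp π.toRingHom :=
    MvPolynomial.ringHom_ext (fun r ↦ by simp [← MvPolynomial.algebraMap_eq]) fun i ↦ by simp
  obtain ⟨b, hb⟩ := exists_sign_eval₂Hom_eq hR polynomialIVP_real
    (ι₁ := φ.comp (algebraMap ℝ B)) (ι₂ := RingHom.id ℝ) (fun x ↦ sign_map_real _ x)
    (J.finite_toSet.union (hS.image (Function.surjInv hπ))) (fun i ↦ φ (π (.X i)))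
  rw [hφ] at hb
  have hker : RingHom.ker π.toRingHom ≤ RingHom.ker (MvPolynomial.aeval b).toRingHom := by
    rw [← hJ, Submodule.span_le]
    intro g hg
    have hπg : π.toRingHom g = 0 := (hJ ▸ Submodule.subset_span hg : g ∈ RingHom.ker π.toRingHom)
    have hsign := hb g (.inl hg)
    rw [RingHom.comp_apply, hπg, map_zero, sign_zero] at hsign
    exact sign_eq_zero_iff.1 hsign.symm
  refine ⟨.liftOfSurjective π hπ (MvPolynomial.aeval b) hker, fun s hs ↦ ?_⟩
  obtain ⟨g, hg, rfl⟩ : ∃ g ∈ Function.surjInv hπ '' S, π g = s :=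
    ⟨_, ⟨s, hs, rfl⟩, Function.surjInv_eq hπ s⟩
  rw [AlgHom.liftOfSurjective_apply]
  exact (hb g (.inr hg)).symm

/-- The **Positivstellensatz** for finitely generated real algebras. -/
theorem neg_one_mem_preordering [Algebra.FiniteType ℝ B] {S : Set B} (hS : S.Finite)
    (h : nonnegCharacters S = ∅) : -1 ∈ preordering S := by
  by_contra hneg
  obtain ⟨R, _, _, _, φ, hR, hφ⟩ := exists_ringHom_polynomialIVP
    (.mk' (preordering S) add_mem mul_mem
      (fun x ↦ by simpa [sq] using sq_mem_preordering S x) hneg : RingPreordering B)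
  obtain ⟨χ, hχ⟩ := exists_algHom_sign_eq hR φ hS
  refine Set.eq_empty_iff_forall_notMem.1 h χ fun s hs ↦ ?_
  rw [← sign_nonneg_iff, hχ s hs, sign_nonneg_iff]
  exact hφ s (subset_preordering S hs)

end Positivstellensatz

section BoundedElements

lemma le_mul_of_logConvex_of_le_geometric {v : ℕ → ℝ} (hv : ∀ n, 0 ≤ v n)
    (hlog : ∀ n, v (n + 1) ^ 2 ≤ v n * v (n + 2)) {c K : ℝ} (hc : 0 < c)
    (hgeom : ∀ n, v n ≤ K * c ^ n) : v 1 ≤ c * v 0 := by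
  rcases (hv 0).eq_or_lt with h0 | h0
  · have h1 : v 1 ^ 2 ≤ 0 := (hlog 0).trans_eq (by rw [← h0, zero_mul])
    rw [pow_eq_zero_iff two_ne_zero |>.1 (h1.antisymm (sq_nonneg _)), ← h0, mul_zero]
  by_contra! hlt
  set r := v 1 / v 0
  have hcr : c < r := (lt_div_iff₀ h0).2 hlt
  have hr : 0 < r := hc.trans hcr
  have hratio (n : ℕ) : 0 < v n ∧ r * v n ≤ v (n + 1) := by
    induction n with
    | zero => exact ⟨h0, (div_mul_cancel₀ _ h0.ne').le⟩
    | succ n ih =>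
      have hpos : 0 < v (n + 1) := (mul_pos hr ih.1).trans_le ih.2
      refine ⟨hpos, le_of_mul_le_mul_left ?_ ih.1⟩
      calc v n * (r * v (n + 1)) = r * v n * v (n + 1) := by ring
        _ ≤ v (n + 1) * v (n + 1) := by gcongr; exact ih.2
        _ = v (n + 1) ^ 2 := (sq _).symm
        _ ≤ v n * v (n + 2) := hlog n
  have hgrow (n : ℕ) : r ^ n * v 0 ≤ v n := by
    induction n with
    | zero => simp
    | succ n ih =>
      calc r ^ (n + 1) * v 0 = r * (r ^ n * v 0) := by ring
        _ ≤ r * v n := by gcongr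
        _ ≤ v (n + 1) := (hratio n).2
  obtain ⟨n, hn⟩ := pow_unbounded_of_one_lt (K / v 0) ((one_lt_div hc).2 hcr)
  rw [div_pow, div_lt_div_iff₀ h0 (pow_pos hc n)] at hn
  exact (hgrow n).not_gt ((hgeom n).trans_lt hn)

variable {B : Type*} [CommRing B] [Algebra ℝ B] {S : Set B} {L : B →ₗ[ℝ] ℝ}

lemma apply_mul_sq_le (hL : ∀ a, 0 ≤ L (a ^ 2)) (a b : B) :
    L (a * b) ^ 2 ≤ L (a ^ 2) * L (b ^ 2) := by
  simpa [sq] using LinearMap.BilinForm.apply_sq_le_of_symm ((LinearMap.mul ℝ B).compr₂ L)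
    (by simpa [sq] using hL) ⟨fun x y ↦ by simp [mul_comm]⟩ a b

lemma apply_sq_le_of_smul_eq (hL : ∀ a ∈ preordering S, 0 ≤ L a) {c : ℝ} (hc : 0 < c) {h p q : B}
    (hp : p ∈ preordering S) (hq : q ∈ preordering S) (heq : c • p = 1 + q + p * h ^ 2) :
    L (h ^ 2) ≤ c * L 1 := by
  have hpow (n : ℕ) : (h ^ 2) ^ n ∈ preordering S := pow_mem (sq_mem_preordering S h) n
  have hstep (n : ℕ) :
      L ((h ^ 2) ^ n) + L (p * (h ^ 2) ^ (n + 1)) ≤ c * L (p * (h ^ 2) ^ n) := by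
    have hmul : c • (p * (h ^ 2) ^ n) =
        (h ^ 2) ^ n + q * (h ^ 2) ^ n + p * (h ^ 2) ^ (n + 1) := by
      rw [← smul_mul_assoc, heq]
      ring
    have hLmul := congr_arg L hmul
    rw [map_smul, smul_eq_mul, map_add, map_add] at hLmul
    linarith [hL _ (mul_mem hq (hpow n))]
  have hgeom (n : ℕ) : L (p * (h ^ 2) ^ n) ≤ c ^ n * L p := by
    induction n with
    | zero => simp
    | succ n ih =>
      calc L (p * (h ^ 2) ^ (n + 1)) ≤ c * L (p * (h ^ 2) ^ n) := by
            linarith [hstep n, hL _ (hpow n)]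
        _ ≤ c * (c ^ n * L p) := by gcongr
        _ = c ^ (n + 1) * L p := by ring
  have hlog (n : ℕ) : L ((h ^ 2) ^ (n + 1)) ^ 2 ≤ L ((h ^ 2) ^ n) * L ((h ^ 2) ^ (n + 2)) := by
    convert apply_mul_sq_le (fun a ↦ hL _ (sq_mem_preordering S a)) (h ^ n) (h ^ (n + 2))
      using 3 <;> ring_nf
  have hbound (n : ℕ) : L ((h ^ 2) ^ n) ≤ c * L p * c ^ n := by
    calc L ((h ^ 2) ^ n) ≤ c * L (p * (h ^ 2) ^ n) := by
          linarith [hstep n, hL _ (mul_mem hp (hpow (n + 1)))]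
      _ ≤ c * (c ^ n * L p) := by gcongr; exact hgeom n
      _ = c * L p * c ^ n := by ring
  simpa using le_mul_of_logConvex_of_le_geometric (fun n ↦ hL _ (hpow n)) hlog hc hbound

variable [Algebra.FiniteType ℝ B]

lemma apply_sq_le_of_forall_algHom_sq_lt (hS : S.Finite) (hL : ∀ a ∈ preordering S, 0 ≤ L a)
    {h : B} {c : ℝ} (hc : 0 < c)
    (hh : ∀ χ ∈ nonnegCharacters S, χ h ^ 2 < c) : L (h ^ 2) ≤ c * L 1 := by
  have hneg : -1 ∈ preordering (insert (h ^ 2 - c • 1) S) := by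
    refine neg_one_mem_preordering (hS.insert _) (Set.eq_empty_of_forall_notMem fun χ hχ ↦ ?_)
    have hχh := hχ _ (Set.mem_insert _ S)
    rw [map_sub, map_pow, map_smul, map_one, smul_eq_mul, mul_one] at hχh
    linarith [hh χ fun s hs ↦ hχ s (.inr hs)]
  obtain ⟨q, hq, p, hp, heq⟩ := exists_eq_add_mul_of_mem_preordering_insert hneg
  refine apply_sq_le_of_smul_eq hL hc hp hq ?_
  rw [Algebra.smul_def] at heq ⊢
  linear_combination heq

/-- Such an element `h` need not belong to the preordering itself. -/
theorem apply_nonneg_of_forall_algHom_mem_Icc (hS : S.Finite)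
    (hL : ∀ a ∈ preordering S, 0 ≤ L a) {h : B} {M : ℝ}
    (hh : ∀ χ ∈ nonnegCharacters S, χ h ∈ Set.Icc 0 M) : 0 ≤ L h := by
  wlog hM : 0 ≤ M generalizing M
  · exact this (M := max M 0) (fun χ hχ ↦ Set.Icc_subset_Icc_right (le_max_left M 0) (hh χ hχ))
      (le_max_right _ _)
  have hL1 : 0 ≤ L 1 := hL _ (one_mem _)
  have hcentre : L (h - (M / 2) • 1) = L h - M / 2 * L 1 := by
    rw [map_sub, map_smul, smul_eq_mul]
  -- `|χ h - M / 2| ≤ M / 2` on characters; Cauchy–Schwarz turns this into a bound for `L`.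
  have key (ε : ℝ) (hε : 0 < ε) : -(ε * L 1) ≤ L h := by
    have hsq := apply_sq_le_of_forall_algHom_sq_lt (h := h - (M / 2) • 1) (c := (M / 2 + ε) ^ 2)
      hS hL (by positivity) fun χ hχ ↦ by
        obtain ⟨h₀, h₁⟩ := hh χ hχ
        rw [map_sub, map_smul, map_one, smul_eq_mul, mul_one]
        exact sq_lt_sq' (by linarith) (by linarith)
    have hcs := apply_mul_sq_le (fun a ↦ hL _ (sq_mem_preordering S a)) (h - (M / 2) • 1) 1
    rw [mul_one, one_pow, hcentre] at hcs
    have habs : |L h - M / 2 * L 1| ≤ (M / 2 + ε) * L 1 :=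
      abs_le_of_sq_le_sq (hcs.trans ((mul_le_mul_of_nonneg_right hsq hL1).trans_eq (by ring)))
        (by positivity)
    linarith [neg_le_of_abs_le habs]
  refine le_of_forall_pos_le_add fun ε hε ↦ ?_
  have hlim := key (ε / (L 1 + 1)) (by positivity)
  have hle : ε / (L 1 + 1) * L 1 ≤ ε := by
    rw [div_mul_eq_mul_div, div_le_iff₀ (by positivity)]
    linarith
  linarith

end BoundedElements

section ConvexCap

variable {E : Type*} [AddCommGroup E] [Module ℝ E]

lemma exists_eq_smul_of_mem_extremePoints_cap (Γ : ConvexCone ℝ E) {ρ : E → ℝ≥0∞}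
    (hadd : ∀ y ∈ Γ, ∀ z ∈ Γ, ρ (y + z) = ρ y + ρ z)
    (hsmul : ∀ (c : ℝ) (y : E), 0 < c → ρ (c • y) = ENNReal.ofReal c * ρ y)
    (hzero : ∀ y ∈ Γ, ρ y = 0 → y = 0) {y z : E} (hy : y ∈ Γ) (hz : z ∈ Γ)
    (hext : y + z ∈ ({x | x ∈ Γ ∧ ρ x ≤ 1} : Set E).extremePoints ℝ) :
    ∃ r : ℝ, y = r • (y + z) := by
  obtain ⟨⟨-, hle⟩, hext⟩ := mem_extremePoints.1 hext
  rw [hadd y hy z hz] at hle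
  obtain ⟨hytop, hztop⟩ := ENNReal.add_ne_top.1 (hle.trans_lt ENNReal.one_lt_top).ne
  rcases eq_or_ne (ρ y) 0 with hy0 | hy0
  · exact ⟨0, by rw [hzero y hy hy0, zero_smul]⟩
  rcases eq_or_ne (ρ z) 0 with hz0 | hz0
  · exact ⟨1, by rw [hzero z hz hz0, add_zero, one_smul]⟩
  set α := (ρ y).toReal
  set β := (ρ z).toReal
  have hα : 0 < α := ENNReal.toReal_pos hy0 hytop
  have hβ : 0 < β := ENNReal.toReal_pos hz0 hztop
  have hαβ : ENNReal.ofReal (α + β) ≤ 1 := by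
    rwa [ENNReal.ofReal_add hα.le hβ.le, ENNReal.ofReal_toReal hytop, ENNReal.ofReal_toReal hztop]
  -- Rescaling `y` and `z` to the weight of `y + z` writes `y + z` as a convex combination.
  have hcap {w : E} (hw : w ∈ Γ) (hwtop : ρ w ≠ ∞) (hw0 : 0 < (ρ w).toReal) :
      ((α + β) / (ρ w).toReal) • w ∈ {x | x ∈ Γ ∧ ρ x ≤ 1} := by
    refine ⟨Γ.smul_mem (by positivity) hw, ?_⟩
    rw [hsmul _ _ (by positivity)]
    nth_rw 2 [← ENNReal.ofReal_toReal hwtop]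
    rwa [← ENNReal.ofReal_mul (by positivity), div_mul_cancel₀ _ hw0.ne']
  have hseg : y + z ∈ openSegment ℝ (((α + β) / α) • y) (((α + β) / β) • z) := by
    refine ⟨α / (α + β), β / (α + β), by positivity, by positivity, by field_simp, ?_⟩
    rw [smul_smul, smul_smul, div_mul_div_cancel₀ (by positivity), div_self hα.ne',
      div_mul_div_cancel₀ (by positivity), div_self hβ.ne', one_smul, one_smul]
  refine ⟨α / (α + β), ?_⟩
  rw [← (hext _ (hcap hy hytop hα) _ (hcap hz hztop hβ) hseg).1, smul_smul,
    div_mul_div_cancel₀ (by positivity), div_self hα.ne', one_smul]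

end ConvexCap

section SquareWeight

variable {A : Type*} [Monoid A] {s : Set A}

/-- The weighted sum of the values of `x` at the squares of the elements of `s`, by which the cone
of positive functionals is cut into compact caps. -/
noncomputable def squareWeight (δ : s → ℝ≥0) (x : A → ℝ) : ℝ≥0∞ :=
  ∑' a : s, ENNReal.ofReal (x ((a : A) ^ 2)) * δ a

variable {δ : s → ℝ≥0}

lemma squareWeight_smul {c : ℝ} (hc : 0 ≤ c) (x : A → ℝ) :
    squareWeight δ (c • x) = ENNReal.ofReal c * squareWeight δ x := by
  simp only [squareWeight, ← ENNReal.tsum_mul_left, ← mul_assoc, ← ENNReal.ofReal_mul hc,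
    Pi.smul_apply, smul_eq_mul]

lemma lowerSemicontinuous_squareWeight : LowerSemicontinuous (squareWeight δ) :=
  lowerSemicontinuous_tsum fun _ ↦ Continuous.lowerSemicontinuous <|
    (ENNReal.continuous_mul_const ENNReal.coe_ne_top).comp
      (ENNReal.continuous_ofReal.comp (continuous_apply _))

end SquareWeight

section PositiveFunctionals

variable {A : Type*} [CommRing A] [Algebra ℝ A]

/-- The cone of linear functionals nonnegative on the preordering generated by `S`, as a subset
of `A → ℝ` so that it carries the topology of pointwise convergence. -/
def positiveFunctionals (S : Set A) : ConvexCone ℝ (A → ℝ) where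
  carrier := {x | ∃ N : A →ₗ[ℝ] ℝ, ⇑N = x ∧ ∀ a ∈ preordering S, 0 ≤ N a}
  smul_mem' := by
    rintro c hc _ ⟨N, rfl, hN⟩
    exact ⟨c • N, rfl, fun a ha ↦ mul_nonneg hc.le (hN a ha)⟩
  add_mem' := by
    rintro _ ⟨N, rfl, hN⟩ _ ⟨N', rfl, hN'⟩
    exact ⟨N + N', rfl, fun a ha ↦ add_nonneg (hN a ha) (hN' a ha)⟩

lemma coe_mem_positiveFunctionals {S : Set A} {N : A →ₗ[ℝ] ℝ} :
    ⇑N ∈ positiveFunctionals S ↔ ∀ a ∈ preordering S, 0 ≤ N a :=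
  ⟨fun ⟨_, hN', h⟩ ↦ DFunLike.coe_injective hN' ▸ h, fun h ↦ ⟨N, rfl, h⟩⟩

lemma isClosed_positiveFunctionals (S : Set A) :
    IsClosed (positiveFunctionals S : Set (A → ℝ)) := by
  have heq : (positiveFunctionals S : Set (A → ℝ)) =
      Set.range (DFunLike.coe : (A →ₗ[ℝ] ℝ) → A → ℝ) ∩ ⋂ a ∈ preordering S, {x | 0 ≤ x a} := by
    ext x
    simp only [Set.mem_inter_iff, Set.mem_iInter₂, Set.mem_ofPred_eq]
    constructor
    · rintro ⟨N, rfl, hN⟩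
      exact ⟨⟨N, rfl⟩, hN⟩
    · rintro ⟨⟨N, rfl⟩, hN⟩
      exact ⟨N, rfl, hN⟩
  rw [heq]
  exact (LinearMap.isClosed_range_coe A ℝ _).inter
    (isClosed_biInter fun a _ ↦ isClosed_le continuous_const (continuous_apply a))

lemma eq_zero_of_apply_one_eq_zero {N : A →ₗ[ℝ] ℝ} (hN : ∀ a, 0 ≤ N (a ^ 2)) (h1 : N 1 = 0) :
    N = 0 := by
  ext a
  have hcs := apply_mul_sq_le hN a 1
  rw [mul_one, one_pow, h1, mul_zero] at hcs
  exact pow_eq_zero_iff two_ne_zero |>.1 (hcs.antisymm (sq_nonneg _))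

section Caps

variable {S s : Set A} {δ : s → ℝ≥0}

lemma squareWeight_add {x y : A → ℝ} (hx : x ∈ positiveFunctionals S)
    (hy : y ∈ positiveFunctionals S) :
    squareWeight δ (x + y) = squareWeight δ x + squareWeight δ y := by
  obtain ⟨N, rfl, hN⟩ := hx
  obtain ⟨N', rfl, hN'⟩ := hy
  simp only [squareWeight, ← ENNReal.tsum_add, ← add_mul, Pi.add_apply]
  congr! 3 with a
  exact ENNReal.ofReal_add (hN _ (sq_mem_preordering S _)) (hN' _ (sq_mem_preordering S _))

variable (hs : Submodule.span ℝ s = ⊤) (hδ : ∀ a, 0 < δ a)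

include hs hδ

lemma eq_zero_of_squareWeight_eq_zero {x : A → ℝ} (hx : x ∈ positiveFunctionals S)
    (h0 : squareWeight δ x = 0) : x = 0 := by
  obtain ⟨N, rfl, hN⟩ := hx
  have hsq (a : A) : 0 ≤ N (a ^ 2) := hN _ (sq_mem_preordering S a)
  suffices N = 0 by rw [this]; rfl
  refine LinearMap.ext_on hs fun a ha ↦ ?_
  have ha0 : N (a ^ 2) = 0 := by
    have hterm := ENNReal.tsum_eq_zero.1 h0 ⟨a, ha⟩
    rw [mul_eq_zero, ENNReal.ofReal_eq_zero, ENNReal.coe_eq_zero] at hterm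
    exact (hterm.resolve_right (hδ _).ne').antisymm (hsq a)
  have hcs := apply_mul_sq_le hsq a 1
  rw [mul_one, ha0, zero_mul] at hcs
  exact pow_eq_zero_iff two_ne_zero |>.1 (hcs.antisymm (sq_nonneg _))

lemma exists_abs_apply_le_of_squareWeight_le_one (h1 : (1 : A) ∈ s) (a : A) :
    ∃ M, ∀ x ∈ positiveFunctionals S, squareWeight δ x ≤ 1 → |x a| ≤ M := by
  have hsq {N : A →ₗ[ℝ] ℝ} (hN : squareWeight δ N ≤ 1) (b : s) : N ((b : A) ^ 2) ≤ (δ b)⁻¹ := by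
    have hterm := (ENNReal.le_tsum b).trans hN
    rw [← ENNReal.ofReal_coe_nnreal, ← ENNReal.ofReal_mul' (δ b).coe_nonneg,
      ENNReal.ofReal_le_one] at hterm
    rw [NNReal.coe_inv, ← one_div]
    exact (le_div_iff₀ (NNReal.coe_pos.2 (hδ b))).2 hterm
  have ha : a ∈ Submodule.span ℝ s := hs ▸ Submodule.mem_top
  induction ha using Submodule.span_induction with
  | mem a ha =>
    refine ⟨√((δ ⟨a, ha⟩)⁻¹ * (δ ⟨1, h1⟩)⁻¹), ?_⟩
    rintro _ ⟨N, rfl, hN⟩ hle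
    have hnn (b : A) : 0 ≤ N (b ^ 2) := hN _ (sq_mem_preordering S b)
    refine Real.abs_le_sqrt ?_
    calc N a ^ 2 ≤ N (a ^ 2) * N (1 ^ 2) := by simpa using apply_mul_sq_le hnn a 1
      _ ≤ _ := mul_le_mul (hsq hle ⟨a, ha⟩) (hsq hle ⟨1, h1⟩) (hnn 1) (by positivity)
  | zero => exact ⟨0, by rintro _ ⟨N, rfl, -⟩ -; simp⟩
  | add a b _ _ iha ihb =>
    obtain ⟨M, hM⟩ := iha
    obtain ⟨M', hM'⟩ := ihb
    refine ⟨M + M', ?_⟩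
    rintro _ ⟨N, rfl, hN⟩ hle
    rw [map_add]
    exact (abs_add_le _ _).trans (add_le_add (hM _ ⟨N, rfl, hN⟩ hle) (hM' _ ⟨N, rfl, hN⟩ hle))
  | smul r a _ iha =>
    obtain ⟨M, hM⟩ := iha
    refine ⟨|r| * M, ?_⟩
    rintro _ ⟨N, rfl, hN⟩ hle
    rw [map_smul, smul_eq_mul, abs_mul]
    exact mul_le_mul_of_nonneg_left (hM _ ⟨N, rfl, hN⟩ hle) (abs_nonneg r)

lemma isCompact_squareWeight_le_one (h1 : (1 : A) ∈ s) :
    IsCompact {x | x ∈ positiveFunctionals S ∧ squareWeight δ x ≤ 1} := by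
  choose M hM using exists_abs_apply_le_of_squareWeight_le_one (S := S) hs hδ h1
  refine (isCompact_univ_pi fun a ↦ isCompact_Icc (a := -M a) (b := M a)).of_isClosed_subset
    ((isClosed_positiveFunctionals S).inter
      (lowerSemicontinuous_squareWeight.isClosed_preimage 1)) ?_
  exact fun x ⟨hx, hle⟩ a _ ↦ abs_le.1 (hM a x hx hle)

omit hs hδ in
lemma convex_squareWeight_le_one :
    Convex ℝ {x | x ∈ positiveFunctionals S ∧ squareWeight δ x ≤ 1} := by
  refine convex_iff_forall_pos.2 fun x hx y hy a b ha hb hab ↦ ?_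
  have hax := (positiveFunctionals S).smul_mem ha hx.1
  have hby := (positiveFunctionals S).smul_mem hb hy.1
  refine ⟨(positiveFunctionals S).add_mem hax hby, ?_⟩
  rw [squareWeight_add hax hby, squareWeight_smul ha.le, squareWeight_smul hb.le]
  calc ENNReal.ofReal a * squareWeight δ x + ENNReal.ofReal b * squareWeight δ y
      ≤ ENNReal.ofReal a * 1 + ENNReal.ofReal b * 1 := by gcongr; exacts [hx.2, hy.2]
    _ = 1 := by rw [mul_one, mul_one, ← ENNReal.ofReal_add ha.le hb.le, hab, ENNReal.ofReal_one]

lemma exists_forall_apply_mul_eq_of_mem_extremePoints [Algebra.FiniteType ℝ A] (hS : S.Finite)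
    {N : A →ₗ[ℝ] ℝ}
    (hN : ⇑N ∈ {x | x ∈ positiveFunctionals S ∧ squareWeight δ x ≤ 1}.extremePoints ℝ)
    {b : A} (hb : ∀ χ ∈ nonnegCharacters S, χ b ∈ Set.Icc 0 1) :
    ∃ r : ℝ, ∀ x, N (b * x) = r * N x := by
  have hNpos := coe_mem_positiveFunctionals.1 hN.1.1
  have htwist {c : A} (hc : ∀ χ ∈ nonnegCharacters S, χ c ∈ Set.Icc 0 1) :
      ⇑(N ∘ₗ LinearMap.mulLeft ℝ c) ∈ positiveFunctionals S :=
    coe_mem_positiveFunctionals.2 fun t ht ↦ apply_nonneg_of_forall_algHom_mem_Icc hS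
      (L := N ∘ₗ LinearMap.mulRight ℝ t) (fun u hu ↦ hNpos _ (mul_mem hu ht)) hc
  have hb' : ∀ χ ∈ nonnegCharacters S, χ (1 - b) ∈ Set.Icc 0 1 := fun χ hχ ↦ by
    rw [map_sub, map_one, Set.sub_mem_Icc_iff_right, sub_self, sub_zero]
    exact hb χ hχ
  have hsplit : ⇑(N ∘ₗ LinearMap.mulLeft ℝ b) + ⇑(N ∘ₗ LinearMap.mulLeft ℝ (1 - b)) = ⇑N := by
    ext x
    simp [sub_mul]
  obtain ⟨r, hr⟩ := exists_eq_smul_of_mem_extremePoints_cap (positiveFunctionals S)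
    (fun _ hy _ hz ↦ squareWeight_add hy hz) (fun _ y hc ↦ squareWeight_smul hc.le y)
    (fun _ hy ↦ eq_zero_of_squareWeight_eq_zero hs hδ hy) (htwist hb) (htwist hb')
    (hsplit.symm ▸ hN)
  rw [hsplit] at hr
  exact ⟨r, congr_fun hr⟩

end Caps

lemma exists_forall_apply_mul_eq_of_bounded {S : Set A} {N : A →ₗ[ℝ] ℝ}
    (hN : ∀ b, (∀ χ ∈ nonnegCharacters S, χ b ∈ Set.Icc 0 1) → ∃ r : ℝ, ∀ x, N (b * x) = r * N x)
    {b : A} {C : ℝ} (hb : ∀ χ ∈ nonnegCharacters S, |χ b| ≤ C) :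
    ∃ r : ℝ, ∀ x, N (b * x) = r * N x := by
  wlog hC : 0 < C generalizing C
  · exact this (C := max C 1) (fun χ hχ ↦ (hb χ hχ).trans (le_max_left C 1)) (by positivity)
  obtain ⟨r, hr⟩ := hN ((2 * C)⁻¹ • (b + algebraMap ℝ A C)) fun χ hχ ↦ by
    obtain ⟨h₁, h₂⟩ := abs_le.1 (hb χ hχ)
    rw [map_smul, map_add, AlgHom.commutes, Algebra.algebraMap_self_apply, smul_eq_mul]
    refine ⟨mul_nonneg (by positivity) (by linarith), ?_⟩
    rw [inv_mul_le_iff₀ (by positivity)]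
    linarith
  refine ⟨2 * C * r - C, fun x ↦ ?_⟩
  have hrx := hr x
  rw [smul_mul_assoc, map_smul, smul_eq_mul, inv_mul_eq_iff_eq_mul₀ (by positivity), add_mul,
    map_add, ← Algebra.smul_def, map_smul, smul_eq_mul] at hrx
  linear_combination hrx

lemma exists_countable_span_eq_top (A : Type*) [CommRing A] [Algebra ℝ A]
    [Algebra.FiniteType ℝ A] :
    ∃ s : Set A, s.Countable ∧ 1 ∈ s ∧ Submodule.span ℝ s = ⊤ := by
  obtain ⟨n, π, hπ⟩ :=
    Algebra.FiniteType.iff_quotient_mvPolynomial''.1 (inferInstance : Algebra.FiniteType ℝ A)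
  refine ⟨insert 1 (π '' Set.range (MvPolynomial.basisMonomials (Fin n) ℝ)),
    ((Set.countable_range _).image _).insert _, Set.mem_insert _ _, top_le_iff.1 ?_⟩
  calc ⊤ = (⊤ : Submodule ℝ (MvPolynomial (Fin n) ℝ)).map π.toLinearMap := by
        rw [Submodule.map_top, LinearMap.range_eq_top.2 hπ]
    _ = Submodule.span ℝ (π '' Set.range (MvPolynomial.basisMonomials (Fin n) ℝ)) := by
        rw [← (MvPolynomial.basisMonomials (Fin n) ℝ).span_eq, Submodule.map_span]
        rfl
    _ ≤ _ := Submodule.span_mono (Set.subset_insert _ _)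

/-- Choquet's argument: the positive cone is a union of compact caps, and bounded elements act by
scalars on the extreme points of a cap. -/
theorem apply_nonneg_of_forall_extremal [Algebra.FiniteType ℝ A] {S : Set A} (hS : S.Finite)
    {L : A →ₗ[ℝ] ℝ} (hL : ∀ t ∈ preordering S, 0 ≤ L t) {a : A}
    (hext : ∀ N : A →ₗ[ℝ] ℝ, (∀ t ∈ preordering S, 0 ≤ N t) →
      (∀ b C, (∀ χ ∈ nonnegCharacters S, |χ b| ≤ C) → ∃ r : ℝ, ∀ x, N (b * x) = r * N x) →
      0 ≤ N a) : 0 ≤ L a := by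
  obtain ⟨s, hcount, h1, hs⟩ := exists_countable_span_eq_top A
  have : Countable s := hcount
  obtain ⟨δ, hδ, hδL⟩ := ENNReal.exists_pos_tsum_mul_lt_of_countable one_ne_zero
    (fun a : s ↦ ENNReal.ofReal (L ((a : A) ^ 2))) fun _ ↦ ENNReal.ofReal_ne_top
  have hLmem : ⇑L ∈ {x | x ∈ positiveFunctionals S ∧ squareWeight δ x ≤ 1} :=
    ⟨coe_mem_positiveFunctionals.2 hL, hδL.le⟩
  rw [← closure_convexHull_extremePoints (isCompact_squareWeight_le_one hs hδ h1)
    convex_squareWeight_le_one] at hLmem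
  refine closure_minimal (convexHull_min ?_ ?_)
    (isClosed_le continuous_const (continuous_apply a)) hLmem
  · intro x hx
    obtain ⟨N, rfl, hN⟩ := hx.1.1
    exact hext N hN fun _ _ ↦ exists_forall_apply_mul_eq_of_bounded fun _ ↦
      exists_forall_apply_mul_eq_of_mem_extremePoints hs hδ hS hx
  · exact convex_halfSpace_ge (f := fun x : A → ℝ ↦ x a) ⟨fun _ _ ↦ rfl, fun _ _ ↦ rfl⟩ 0

end PositiveFunctionals

section Fibres

variable {A B : Type*} [CommRing A] [Algebra ℝ A] [CommRing B] [Algebra ℝ B]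

lemma preordering_image_le (π : A →ₐ[ℝ] B) (hπ : Function.Surjective π) (S : Set A) :
    preordering (π '' S) ≤ (preordering S).map π := by
  refine preordering_le (fun b ↦ ?_) (Set.image_mono (subset_preordering S))
  obtain ⟨a, rfl⟩ := hπ b
  exact ⟨a ^ 2, sq_mem_preordering S a, map_pow π a 2⟩

lemma exists_linearMap_apply_map_eq {π : A →ₐ[ℝ] B} (hπ : Function.Surjective π)
    {N : A →ₗ[ℝ] ℝ} (hN : ∀ x, π x = 0 → N x = 0) : ∃ N' : B →ₗ[ℝ] ℝ, ∀ x, N' (π x) = N x := by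
  obtain ⟨σ, hσ⟩ := π.toLinearMap.exists_rightInverse_of_surjective (LinearMap.range_eq_top.2 hπ)
  refine ⟨N ∘ₗ σ, fun x ↦ sub_eq_zero.1 ?_⟩
  rw [LinearMap.comp_apply, ← map_sub]
  exact hN _ (by rw [map_sub, sub_eq_zero]; exact LinearMap.congr_fun hσ (π x))

/-- The ideal of the fibre of `h = (h j)` over the point `lam`. -/
def fibreIdeal {ι : Type*} (h : ι → A) (lam : ι → ℝ) : Ideal A :=
  Ideal.span (Set.range fun j ↦ h j - algebraMap ℝ A (lam j))

variable {ι : Type*} {S : Set A} {h : ι → A}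

lemma apply_eq_zero_of_mem_fibreIdeal {N : A →ₗ[ℝ] ℝ} {lam : ι → ℝ}
    (hN : ∀ j x, N (h j * x) = lam j * N x) {x : A} (hx : x ∈ fibreIdeal h lam) : N x = 0 := by
  suffices ∀ y, N (x * y) = 0 by simpa using this 1
  induction hx using Submodule.span_induction with
  | mem x hx =>
    obtain ⟨j, rfl⟩ := hx
    intro y
    rw [sub_mul, map_sub, hN, ← Algebra.smul_def, map_smul, smul_eq_mul, sub_self]
  | zero => simp
  | add x x' _ _ hx hx' => exact fun y ↦ by rw [add_mul, map_add, hx, hx', add_zero]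
  | smul r x _ hx => exact fun y ↦ by rw [smul_eq_mul, mul_comm r, mul_assoc, hx]

lemma eq_zero_of_forall_exists_apply_ne [Algebra.FiniteType ℝ A] (hS : S.Finite) {lam : ι → ℝ}
    (hlam : ∀ χ ∈ nonnegCharacters S, ∃ j, χ (h j) ≠ lam j) {N : A ⧸ fibreIdeal h lam →ₗ[ℝ] ℝ}
    (hN : ∀ t ∈ preordering (Ideal.Quotient.mkₐ ℝ (fibreIdeal h lam) '' S), 0 ≤ N t) : N = 0 := by
  have hneg := neg_one_mem_preordering (hS.image (Ideal.Quotient.mkₐ ℝ (fibreIdeal h lam)))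
    (Set.eq_empty_of_forall_notMem fun χ hχ ↦ by
      obtain ⟨j, hj⟩ := hlam (χ.comp (Ideal.Quotient.mkₐ ℝ _)) fun s hs ↦ hχ _ ⟨s, hs, rfl⟩
      have hmem : h j - algebraMap ℝ A (lam j) ∈ fibreIdeal h lam := Ideal.subset_span ⟨j, rfl⟩
      refine hj (sub_eq_zero.1 ?_)
      simpa using congr_arg χ (Ideal.Quotient.eq_zero_iff_mem.2 hmem))
  have h1 := hN _ (one_mem _)
  have h2 := hN _ hneg
  rw [map_neg] at h2
  exact eq_zero_of_apply_one_eq_zero (fun a ↦ hN _ (sq_mem_preordering _ a)) (by linarith)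

theorem apply_nonneg_of_forall_fibre [Algebra.FiniteType ℝ A] (hS : S.Finite)
    {L : A →ₗ[ℝ] ℝ} (hL : ∀ t ∈ preordering S, 0 ≤ L t)
    (hbdd : ∀ j, ∃ C, ∀ χ ∈ nonnegCharacters S, |χ (h j)| ≤ C) {a : A}
    (hfib : ∀ χ ∈ nonnegCharacters S, ∀ N : A ⧸ fibreIdeal h (fun j ↦ χ (h j)) →ₗ[ℝ] ℝ,
      (∀ t ∈ preordering (Ideal.Quotient.mkₐ ℝ (fibreIdeal h fun j ↦ χ (h j)) '' S), 0 ≤ N t) →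
      0 ≤ N (Ideal.Quotient.mkₐ ℝ _ a)) : 0 ≤ L a := by
  refine apply_nonneg_of_forall_extremal hS hL fun N hN hmul ↦ ?_
  choose lam hlam using fun j ↦ hmul (h j) _ (hbdd j).choose_spec
  have hsurj := Ideal.Quotient.mkₐ_surjective ℝ (fibreIdeal h lam)
  obtain ⟨N', hN'⟩ := exists_linearMap_apply_map_eq hsurj fun x hx ↦
    apply_eq_zero_of_mem_fibreIdeal hlam (Ideal.Quotient.eq_zero_iff_mem.1 hx)
  have hN'pos : ∀ t ∈ preordering (Ideal.Quotient.mkₐ ℝ (fibreIdeal h lam) '' S), 0 ≤ N' t := by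
    intro t ht
    obtain ⟨u, hu, rfl⟩ := preordering_image_le _ hsurj S ht
    exact (hN u hu).trans_eq (hN' u).symm
  rw [← hN']
  by_cases hatt : ∃ χ ∈ nonnegCharacters S, ∀ j, χ (h j) = lam j
  · obtain ⟨χ, hχ, hχlam⟩ := hatt
    obtain rfl : (fun j ↦ χ (h j)) = lam := funext hχlam
    exact hfib χ hχ N' hN'pos
  · push Not at hatt
    rw [eq_zero_of_forall_exists_apply_ne hS hatt hN'pos, LinearMap.zero_apply]

end Fibres

end RationalMoment

/-! ### Quotients of cylinders -/

namespace RationalMoment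

open Polynomial

section UnivariateSquares

lemma exists_eq_C_add_sq_mul {p : ℝ[X]} (hdeg : 0 < p.degree) (hp : ∀ x, 0 ≤ p.eval x) :
    ∃ c r : ℝ, ∃ q : ℝ[X], 0 ≤ c ∧ p = C c + (X - C r) ^ 2 * q ∧ ∀ x, 0 ≤ q.eval x := by
  have htop : Filter.Tendsto (fun x ↦ p.eval x) (Filter.cocompact ℝ) Filter.atTop :=
    (p.tendsto_norm_atTop hdeg tendsto_norm_cocompact_atTop).congr fun x ↦
      Real.norm_of_nonneg (hp x)
  obtain ⟨r, hr⟩ := p.continuous.exists_forall_le htop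
  have hder : p.derivative.eval r = 0 := by
    rw [← p.deriv]
    exact IsLocalMin.deriv_eq_zero (.of_forall hr)
  have hne : p - C (p.eval r) ≠ 0 := fun h ↦
    hdeg.not_ge (sub_eq_zero.1 h ▸ degree_C_le)
  have hmult : 1 < (p - C (p.eval r)).rootMultiplicity r :=
    (one_lt_rootMultiplicity_iff_isRoot hne).2 ⟨by simp, by simpa using hder⟩
  obtain ⟨q, hq⟩ := (le_rootMultiplicity_iff hne).1 hmult
  have heq : p = C (p.eval r) + (X - C r) ^ 2 * q := by rw [← hq, add_sub_cancel]
  refine ⟨p.eval r, r, q, hp r, heq, fun x ↦ ?_⟩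
  have hoff : {r}ᶜ ⊆ {x | 0 ≤ q.eval x} := fun x hx ↦ by
    have hx0 : 0 < (x - r) ^ 2 := sq_pos_of_ne_zero (sub_ne_zero.2 hx)
    have hmin := hr x
    rw [heq] at hmin
    simp only [eval_add, eval_C, eval_mul, eval_pow, eval_sub, eval_X, sub_self] at hmin
    exact nonneg_of_mul_nonneg_right (by simpa using hmin) hx0
  have hcl := closure_minimal hoff (isClosed_le continuous_const q.continuous)
  rw [(dense_compl_singleton r).closure_eq] at hcl
  exact hcl (Set.mem_univ x)

lemma mem_preordering_empty_of_forall_eval_nonneg (p : ℝ[X]) (hp : ∀ x, 0 ≤ p.eval x) :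
    p ∈ preordering (∅ : Set ℝ[X]) := by
  have hC {c : ℝ} (hc : 0 ≤ c) : C c ∈ preordering (∅ : Set ℝ[X]) := by
    rw [← Real.sq_sqrt hc, C_pow]
    exact sq_mem_preordering ∅ _
  induction hn : p.natDegree using Nat.strong_induction_on generalizing p with
  | _ n ih =>
    rcases le_or_gt p.degree 0 with hdeg | hdeg
    · rw [eq_C_of_degree_le_zero hdeg, coeff_zero_eq_eval_zero]
      exact hC (hp 0)
    obtain ⟨c, r, q, hc, heq, hq⟩ := exists_eq_C_add_sq_mul hdeg hp
    have hq0 : q ≠ 0 := by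
      rintro rfl
      rw [heq, mul_zero, add_zero] at hdeg
      exact hdeg.not_ge degree_C_le
    have hlt : q.natDegree < n := by
      rw [← hn, heq, natDegree_C_add, natDegree_mul (pow_ne_zero _ (X_sub_C_ne_zero r)) hq0,
        natDegree_pow, natDegree_X_sub_C]
      lia
    rw [heq]
    exact add_mem (hC hc) (mul_mem (sq_mem_preordering ∅ _) (ih _ hlt q hq rfl))

end UnivariateSquares

section LocalizedLine

lemma exists_mem_forall_dvd_pow {R : Type*} [CommMonoid R] {M : Submonoid R} (hM : M.FG) :
    ∃ g ∈ M, ∀ q ∈ M, ∃ n, q ∣ g ^ n := by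
  obtain ⟨F, rfl⟩ := hM
  refine ⟨∏ f ∈ F, f, Submonoid.prod_mem _ fun f hf ↦ Submonoid.subset_closure hf, fun q hq ↦ ?_⟩
  induction hq using Submonoid.closure_induction with
  | mem q hq => exact ⟨1, by simpa using Finset.dvd_prod_of_mem id hq⟩
  | one => exact ⟨0, one_dvd _⟩
  | mul q q' _ _ hq hq' =>
    obtain ⟨n, hn⟩ := hq
    obtain ⟨n', hn'⟩ := hq'
    exact ⟨n + n', pow_add (∏ f ∈ F, f) n n' ▸ mul_dvd_mul hn hn'⟩

lemma map_mem_preordering_empty {A B : Type*} [CommRing A] [CommRing B] (f : A →+* B) {a : A}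
    (ha : a ∈ preordering (∅ : Set A)) : f a ∈ preordering (∅ : Set B) :=
  preordering_le (P := (preordering ∅).comap f)
    (fun a ↦ by simpa using sq_mem_preordering ∅ (f a)) (Set.empty_subset _) ha

variable {ℰ : Submonoid ℝ[X]}

lemma mem_preordering_empty_of_forall_algHom_nonneg (hℰ : ℰ.FG) {z : Localization ℰ}
    (hz : ∀ χ : Localization ℰ →ₐ[ℝ] ℝ, 0 ≤ χ z) :
    z ∈ preordering (∅ : Set (Localization ℰ)) := by
  obtain ⟨g, hg, hdvd⟩ := exists_mem_forall_dvd_pow hℰ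
  obtain ⟨⟨u, v⟩, huv⟩ := IsLocalization.surj ℰ z
  have hnonneg (t : ℝ) : 0 ≤ (u * v * g ^ 2).eval t := by
    rcases eq_or_ne (g.eval t) 0 with ht | ht
    · simp [ht]
    have hunit (q : ℰ) : IsUnit (aeval t (q : ℝ[X])) := by
      obtain ⟨n, hn⟩ := hdvd q q.2
      have hpow : IsUnit (aeval t (g ^ n)) := by
        rw [map_pow, coe_aeval_eq_eval]
        exact (Ne.isUnit ht).pow n
      exact isUnit_of_dvd_unit (map_dvd (aeval t) hn) hpow
    let χ : Localization ℰ →ₐ[ℝ] ℝ := IsLocalization.liftAlgHom hunit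
    have hχ (p : ℝ[X]) : χ (algebraMap _ _ p) = p.eval t := by simp [χ]
    have hu : χ z * (v : ℝ[X]).eval t = u.eval t := by
      rw [← hχ, ← hχ, ← map_mul, huv]
    calc 0 ≤ χ z * ((v : ℝ[X]).eval t * g.eval t) ^ 2 := mul_nonneg (hz χ) (sq_nonneg _)
      _ = (u * v * g ^ 2).eval t := by
        rw [eval_mul, eval_mul, eval_pow, ← hu]
        ring
  have hmem := map_mem_preordering_empty (algebraMap ℝ[X] (Localization ℰ))
    (mem_preordering_empty_of_forall_eval_nonneg _ hnonneg)
  obtain ⟨w, hw⟩ := (IsLocalization.map_units (Localization ℰ) (v * ⟨g, hg⟩)).exists_right_inv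
  have heq : z = algebraMap _ _ (u * v * g ^ 2) * w ^ 2 := by
    simp only [Submonoid.coe_mul, map_mul, map_pow] at huv hw ⊢
    rw [← huv]
    linear_combination (-z) * (algebraMap _ _ (v : ℝ[X]) * algebraMap _ _ g * w + 1) * hw
  rw [heq]
  exact mul_mem hmem (sq_mem_preordering ∅ w)

variable {B : Type*} [CommRing B] [Algebra ℝ B] {ψ : Localization ℰ →ₐ[ℝ] B}

lemma finite_algHom_of_not_injective (hψ : Function.Surjective ψ) (hker : ¬ Function.Injective ψ) :
    Finite (B →ₐ[ℝ] ℝ) := by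
  obtain ⟨x, hx, hx0⟩ : ∃ x, ψ x = 0 ∧ x ≠ 0 := by
    simpa [injective_iff_map_eq_zero] using hker
  obtain ⟨⟨p, q⟩, hpq⟩ := IsLocalization.surj ℰ x
  have hp0 : p ≠ 0 := by
    rintro rfl
    rw [map_zero] at hpq
    exact hx0 ((IsLocalization.map_units (Localization ℰ) q).mul_left_eq_zero.1 hpq)
  let φ : ℝ[X] →ₐ[ℝ] B := ψ.comp (IsScalarTower.toAlgHom ℝ ℝ[X] (Localization ℰ))
  have hφp : φ p = 0 := by
    change ψ (algebraMap _ _ p) = 0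
    rw [← hpq, map_mul, hx, zero_mul]
  have hroot (χ : B →ₐ[ℝ] ℝ) : χ (φ X) ∈ p.rootSet ℝ := by
    rw [mem_rootSet, aeval_algHom_apply, aeval_algHom_apply, aeval_X_left_apply, hφp, map_zero]
    exact ⟨hp0, rfl⟩
  refine Finite.of_injective (fun χ ↦ (⟨χ (φ X), hroot χ⟩ : p.rootSet ℝ)) fun χ χ' h ↦ ?_
  rw [← AlgHom.cancel_right hψ]
  exact IsLocalization.algHom_ext ℰ (Polynomial.algHom_ext (congr_arg Subtype.val h))

lemma apply_nonneg_of_surjective_localization [Algebra.FiniteType ℝ B] (hℰ : ℰ.FG)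
    (hψ : Function.Surjective ψ) {N : B →ₗ[ℝ] ℝ} (hN : ∀ t ∈ preordering ∅, 0 ≤ N t) {a : B}
    (ha : ∀ χ : B →ₐ[ℝ] ℝ, 0 ≤ χ a) : 0 ≤ N a := by
  by_cases hinj : Function.Injective ψ
  · obtain ⟨z, rfl⟩ := hψ a
    refine hN _ (map_mem_preordering_empty ψ.toRingHom
      (mem_preordering_empty_of_forall_algHom_nonneg hℰ fun χ ↦ ?_))
    let e := AlgEquiv.ofBijective ψ ⟨hinj, hψ⟩
    exact (e.symm_apply_apply z).symm ▸ ha (χ.comp e.symm.toAlgHom)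
  · have := finite_algHom_of_not_injective hψ hinj
    obtain ⟨M, hM⟩ := (Set.finite_range fun χ : B →ₐ[ℝ] ℝ ↦ χ a).bddAbove
    exact apply_nonneg_of_forall_algHom_mem_Icc Set.finite_empty hN fun χ _ ↦
      ⟨ha χ, hM ⟨χ, rfl⟩⟩

end LocalizedLine

section Cylinder

open scoped TensorProduct

lemma surjective_comp_includeLeft {E C B : Type*} [CommRing E] [Algebra ℝ E] [CommRing C]
    [Algebra ℝ C] [CommRing B] [Algebra ℝ B] {θ : E ⊗[ℝ] C →ₐ[ℝ] B} (hθ : Function.Surjective θ)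
    {lam : C → ℝ} (hlam : ∀ c, θ (1 ⊗ₜ c) = algebraMap ℝ B (lam c)) :
    Function.Surjective (θ.comp Algebra.TensorProduct.includeLeft) := by
  intro y
  obtain ⟨z, rfl⟩ := hθ y
  induction z using TensorProduct.induction_on with
  | zero => exact ⟨0, by simp⟩
  | tmul e c =>
    refine ⟨lam c • e, ?_⟩
    have hsplit : e ⊗ₜ[ℝ] c = e ⊗ₜ[ℝ] (1 : C) * (1 : E) ⊗ₜ[ℝ] c := by simp
    rw [hsplit, map_mul, hlam, map_smul, Algebra.smul_def, mul_comm]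
    rfl
  | add x y hx hy =>
    obtain ⟨x', hx'⟩ := hx
    obtain ⟨y', hy'⟩ := hy
    exact ⟨x' + y', by rw [map_add, map_add, hx', hy']⟩

theorem apply_nonneg_of_surjective_tensorProduct {ℰ : Submonoid ℝ[X]} (hℰ : ℰ.FG) {C B : Type*}
    [CommRing C] [Algebra ℝ C] [FiniteDimensional ℝ C] [CommRing B] [Algebra ℝ B]
    [Algebra.FiniteType ℝ B] {ρ : Localization ℰ ⊗[ℝ] C →ₐ[ℝ] B} (hρ : Function.Surjective ρ)
    {N : B →ₗ[ℝ] ℝ} (hN : ∀ t ∈ preordering ∅, 0 ≤ N t) {a : B}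
    (ha : ∀ χ : B →ₐ[ℝ] ℝ, 0 ≤ χ a) : 0 ≤ N a := by
  refine apply_nonneg_of_forall_fibre (h := fun c : C ↦ ρ (1 ⊗ₜ c)) Set.finite_empty hN
    (fun c ↦ ?_) fun χ _ N' hN' ↦ ?_
  · obtain ⟨M, hM⟩ := (Set.finite_range fun χ : C →ₐ[ℝ] ℝ ↦ |χ c|).bddAbove
    exact ⟨M, fun χ _ ↦ hM ⟨χ.comp (ρ.comp Algebra.TensorProduct.includeRight), rfl⟩⟩
  · let π := Ideal.Quotient.mkₐ ℝ (fibreIdeal (fun c : C ↦ ρ (1 ⊗ₜ c)) fun c ↦ χ (ρ (1 ⊗ₜ c)))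
    have hπ : Function.Surjective π := Ideal.Quotient.mkₐ_surjective ℝ _
    have hlam (c : C) : π (ρ (1 ⊗ₜ c)) = algebraMap ℝ _ (χ (ρ (1 ⊗ₜ c))) := by
      rw [← sub_eq_zero, ← π.commutes, ← map_sub]
      exact Ideal.Quotient.eq_zero_iff_mem.2 (Ideal.subset_span ⟨c, rfl⟩)
    have : Algebra.FiniteType ℝ (B ⧸ _) := .of_surjective π hπ
    rw [Set.image_empty] at hN'
    exact apply_nonneg_of_surjective_localization hℰ
      (surjective_comp_includeLeft (θ := π.comp ρ) (hπ.comp hρ) hlam) hN'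
      fun χ' ↦ ha (χ'.comp π)

end Cylinder

end RationalMoment

/-! ### Algebras of fractions with cylindrical fibres -/

namespace RationalMoment

section CylindricalFibres

open scoped TensorProduct

variable {A : Type*} [CommRing A] [Algebra ℝ A] {S : Set A}

/-- There are elements `h j`, each bounded on the real characters of `A` nonnegative on `S`, such
that every fibre of `h` over such a character embeds into a cylinder
`(localized line) × (finite scheme)`. The index type of `h` may be infinite, and each `h j` may have
its own bound. -/
def HasCylindricalFibres (S : Set A) : Prop :=
  ∃ (ι : Type) (h : ι → A), (∀ j, ∃ C, ∀ χ ∈ nonnegCharacters S, |χ (h j)| ≤ C) ∧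
    ∀ χ ∈ nonnegCharacters S, ∃ ℰ : Submonoid (Polynomial ℝ), ℰ.FG ∧
      ∃ (C : FinCommAlg)
        (ρ : Localization ℰ ⊗[ℝ] C.carrier →ₐ[ℝ] A ⧸ fibreIdeal h fun j ↦ χ (h j)),
        Function.Surjective ρ

lemma apply_nonneg_of_hasCylindricalFibres [Algebra.FiniteType ℝ A] (hS : S.Finite)
    (hfib : HasCylindricalFibres S) {L : A →ₗ[ℝ] ℝ} (hL : ∀ t ∈ preordering S, 0 ≤ L t) {a : A}
    (ha : ∀ χ : A →ₐ[ℝ] ℝ, 0 ≤ χ a) : 0 ≤ L a := by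
  obtain ⟨ι, h, hbdd, hcyl⟩ := hfib
  refine apply_nonneg_of_forall_fibre hS hL hbdd fun χ hχ N hN ↦ ?_
  obtain ⟨ℰ, hℰ, C, ρ, hρ⟩ := hcyl χ hχ
  have := C.findim
  have : Algebra.FiniteType ℝ (A ⧸ fibreIdeal h fun j ↦ χ (h j)) :=
    .of_surjective (Ideal.Quotient.mkₐ ℝ _) (Ideal.Quotient.mkₐ_surjective ℝ _)
  exact apply_nonneg_of_surjective_tensorProduct hℰ hρ
    (fun t ht ↦ hN t (preordering_le (sq_mem_preordering _) (Set.empty_subset _) ht))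
    fun χ' ↦ ha (χ'.comp (Ideal.Quotient.mkₐ ℝ _))

end CylindricalFibres

section Characters

open MvPolynomial

variable {σ : Type*} {D : Submonoid (MvPolynomial σ ℝ)}

lemma algHom_algebraMap_eq_eval (χ : Localization D →ₐ[ℝ] ℝ) (p : MvPolynomial σ ℝ) :
    χ (algebraMap _ _ p) = eval (fun i ↦ χ (algebraMap (MvPolynomial σ ℝ) _ (X i))) p := by
  have : χ.comp (IsScalarTower.toAlgHom ℝ (MvPolynomial σ ℝ) (Localization D)) =
      aeval fun i ↦ χ (algebraMap (MvPolynomial σ ℝ) _ (X i)) := by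
    ext i
    simp
  simpa using DFunLike.congr_fun this p

lemma exists_forall_algHom_algebraMap_eq_eval (χ : Localization D →ₐ[ℝ] ℝ) :
    ∃ t : σ → ℝ, (∀ q ∈ D, eval t q ≠ 0) ∧ ∀ p, χ (algebraMap _ _ p) = eval t p := by
  refine ⟨_, fun q hq ↦ ?_, algHom_algebraMap_eq_eval χ⟩
  rw [← algHom_algebraMap_eq_eval]
  exact ((IsLocalization.map_units (Localization D) ⟨q, hq⟩).map χ).ne_zero

lemma algHom_eq_evalLoc {d : ℕ} {D : Submonoid (MvPolynomial (Fin d) ℝ)}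
    {χ : Localization D →ₐ[ℝ] ℝ} {t : Fin d → ℝ} (ht : ∀ q ∈ D, eval t q ≠ 0)
    (hχ : ∀ p, χ (algebraMap _ _ p) = eval t p) (x : Localization D) : χ x = evalLoc D t ht x := by
  have : χ.toRingHom = evalLoc D t ht := by
    refine IsLocalization.ringHom_ext D (RingHom.ext fun p ↦ ?_)
    simp [evalLoc, hχ]
  exact DFunLike.congr_fun this x

lemma hasCylindricalFibres_of_evalLoc {d : ℕ} {D : Submonoid (MvPolynomial (Fin d) ℝ)} {ι : Type}
    {S : Set (MvPolynomial (Fin d) ℝ)} (h : ι → Localization D)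
    (hbdd : ∃ C : ℝ, ∀ t : Fin d → ℝ, ∀ ht : ∀ q ∈ D, eval t q ≠ 0,
      (∀ s ∈ S, 0 ≤ eval t s) → ∀ j, |evalLoc D t ht (h j)| ≤ C)
    (hcyl : ∀ lam : ι → ℝ,
      (∃ t : Fin d → ℝ, ∃ ht : ∀ q ∈ D, eval t q ≠ 0,
        (∀ s ∈ S, 0 ≤ eval t s) ∧ ∀ j, evalLoc D t ht (h j) = lam j) →
      ∃ ℰ : Submonoid (Polynomial ℝ), ℰ.FG ∧
        ∃ (C : FinCommAlg) (ρ : TensorProduct ℝ (Localization ℰ) C.carrier →ₐ[ℝ]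
          Localization D ⧸ fibreIdeal h lam), Function.Surjective ρ) :
    HasCylindricalFibres (algebraMap _ (Localization D) '' S) := by
  obtain ⟨C, hC⟩ := hbdd
  have hpoint (χ) (hχ : χ ∈ nonnegCharacters (algebraMap _ (Localization D) '' S)) :
      ∃ (t : Fin d → ℝ) (ht : ∀ q ∈ D, eval t q ≠ 0),
        (∀ s ∈ S, 0 ≤ eval t s) ∧ ∀ j, evalLoc D t ht (h j) = χ (h j) := by
    obtain ⟨t, ht, htχ⟩ := exists_forall_algHom_algebraMap_eq_eval χ
    exact ⟨t, ht, fun s hs ↦ htχ s ▸ hχ _ ⟨s, hs, rfl⟩,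
      fun j ↦ (algHom_eq_evalLoc ht htχ (h j)).symm⟩
  refine ⟨ι, h, fun j ↦ ⟨C, fun χ hχ ↦ ?_⟩, fun χ hχ ↦ hcyl _ (hpoint χ hχ)⟩
  obtain ⟨t, ht, hS, heq⟩ := hpoint χ hχ
  exact heq j ▸ hC t ht hS j

lemma apply_mk_nonneg_of_hasCylindricalFibres [Finite σ] {E : Submonoid (MvPolynomial σ ℝ)}
    (hDE : D ≤ E) (hD : D.FG) {S : Set (MvPolynomial σ ℝ)} (hS : S.Finite)
    (hfib : HasCylindricalFibres (algebraMap _ (Localization D) '' S)) {L : Localization E →ₗ[ℝ] ℝ}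
    (hL : ∀ t ∈ preordering (algebraMap _ (Localization E) '' S), 0 ≤ L t)
    {p q : MvPolynomial σ ℝ} (hq : q ∈ D)
    (hpq : ∀ t : σ → ℝ, eval t q ≠ 0 → 0 ≤ eval t p / eval t q) :
    0 ≤ L (Localization.mk p ⟨q, hDE hq⟩) := by
  have : Monoid.FG D := (Monoid.fg_iff_submonoid_fg D).2 hD
  have : Algebra.FiniteType (MvPolynomial σ ℝ) (Localization D) :=
    IsLocalization.finiteType_of_monoid_fg D _
  have : Algebra.FiniteType ℝ (Localization D) :=
    .trans (S := MvPolynomial σ ℝ) inferInstance inferInstance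
  let φ : Localization D →ₐ[MvPolynomial σ ℝ] Localization E :=
    IsLocalization.liftAlgHom (M := D) (f := Algebra.ofId _ _)
      fun y ↦ IsLocalization.map_units (Localization E) (⟨y.1, hDE y.2⟩ : E)
  have hφ : φ (Localization.mk p ⟨q, hq⟩) = Localization.mk p ⟨q, hDE hq⟩ := by
    rw [Localization.mk_eq_mk', Localization.mk_eq_mk', IsLocalization.eq_mk'_iff_mul_eq,
      ← φ.commutes p, ← IsLocalization.mk'_spec (Localization D) p ⟨q, hq⟩, map_mul, φ.commutes]
  have hle : preordering (algebraMap _ (Localization D) '' S) ≤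
      (preordering (algebraMap _ (Localization E) '' S)).comap φ.toRingHom := by
    refine preordering_le (fun y ↦ ?_) ?_
    · rw [Subsemiring.mem_comap, map_pow]
      exact sq_mem_preordering _ _
    · rintro _ ⟨s, hs, rfl⟩
      exact subset_preordering _ ⟨s, hs, (φ.commutes s).symm⟩
  rw [← hφ]
  refine apply_nonneg_of_hasCylindricalFibres (L := L ∘ₗ (φ.restrictScalars ℝ).toLinearMap)
    (hS.image _) hfib (fun t ht ↦ hL _ (hle ht)) fun χ ↦ ?_
  obtain ⟨t, ht, htχ⟩ := exists_forall_algHom_algebraMap_eq_eval χ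
  have hmul := congr_arg χ (IsLocalization.mk'_spec (Localization D) p ⟨q, hq⟩)
  rw [map_mul, htχ, htχ] at hmul
  rw [Localization.mk_eq_mk', eq_div_of_mul_eq (ht q hq) hmul]
  exact hpq t (ht q hq)

end Characters

end RationalMoment

/-! ### Haviland's theorem for fractions -/

namespace RationalMoment

open MvPolynomial Filter Topology MeasureTheory
open scoped CompactlySupported

section FractionGerms

variable {σ : Type*} {D : Submonoid (MvPolynomial σ ℝ)}

variable (D) in
/-- The filter on `ℝ^σ` generated by the complements of the zero sets of the polynomials in `D`. -/
def nonvanishingFilter : Filter (σ → ℝ) := ⨅ q : D, 𝓟 {t | eval t q.1 ≠ 0}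

lemma hasBasis_nonvanishingFilter :
    (nonvanishingFilter D).HasBasis (fun _ : D ↦ True) fun q ↦ {t | eval t q.1 ≠ 0} := by
  refine hasBasis_iInf_principal fun q r ↦ ⟨q * r, fun t ht ↦ ?_, fun t ht ↦ ?_⟩
  all_goals
    rw [Set.mem_ofPred_eq, Submonoid.coe_mul, map_mul] at ht
  · exact left_ne_zero_of_mul ht
  · exact right_ne_zero_of_mul ht

lemma eventually_eval_ne_zero (q : D) : ∀ᶠ t in nonvanishingFilter D, eval t q.1 ≠ 0 :=
  hasBasis_nonvanishingFilter.mem_of_mem trivial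

variable (D) in
/-- A fraction, viewed as the germ of the function it defines off the zero set of its denominator.
Germs are needed since the elements of `D` may have no common nonzero. -/
noncomputable def fractionGerm : Localization D →+* Germ (nonvanishingFilter D) ℝ :=
  IsLocalization.lift (M := D)
    (g := (Germ.coeRingHom (nonvanishingFilter D)).comp (RingHom.pi fun t ↦ eval t))
    fun q ↦ .of_mul_eq_one (↑fun t ↦ (eval t q.1)⁻¹ : Germ (nonvanishingFilter D) ℝ) <|
      Germ.coe_eq.2 ((eventually_eval_ne_zero q).mono fun _ ↦ mul_inv_cancel₀)

lemma fractionGerm_mk (p : MvPolynomial σ ℝ) (q : D) :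
    fractionGerm D (Localization.mk p q) = ↑fun t ↦ eval t p / eval t q.1 := by
  rw [Localization.mk_eq_mk', fractionGerm, IsLocalization.lift_mk'_spec]
  refine Germ.coe_eq.2 ((eventually_eval_ne_zero q).mono fun t ht ↦ ?_)
  exact (mul_div_cancel₀ _ ht).symm

lemma fractionGerm_smul (c : ℝ) (a : Localization D) :
    fractionGerm D (c • a) = ↑(fun _ : σ → ℝ ↦ c) * fractionGerm D a := by
  have hc : fractionGerm D (Localization.mk (C c) 1) = ↑(fun _ : σ → ℝ ↦ c) := by
    simp [fractionGerm_mk]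
  rw [Algebra.smul_def, map_mul, ← hc, Localization.mk_one_eq_algebraMap,
    IsScalarTower.algebraMap_apply ℝ (MvPolynomial σ ℝ), MvPolynomial.algebraMap_eq]

lemma exists_eq_mk_of_fractionGerm_nonneg {a : Localization D} (ha : 0 ≤ fractionGerm D a) :
    ∃ (p : MvPolynomial σ ℝ) (q : D), a = Localization.mk p q ∧
      ∀ t, eval t q.1 ≠ 0 → 0 ≤ eval t p / eval t q.1 := by
  induction a using Localization.induction_on with | H pq
  obtain ⟨p, q⟩ := pq
  rw [fractionGerm_mk, Germ.coe_nonneg] at ha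
  obtain ⟨r, -, hr⟩ := hasBasis_nonvanishingFilter.eventually_iff.1 ha
  refine ⟨r * p, r * q, ?_, fun t ht ↦ ?_⟩
  · rw [← Localization.mk_mul, Localization.mk_self, one_mul]
  · rw [Submonoid.coe_mul, map_mul] at ht ⊢
    have hrt := left_ne_zero_of_mul ht
    rw [map_mul, mul_div_mul_left _ _ hrt]
    exact hr hrt

end FractionGerms

section RegularizedQuotient

/-- A continuous approximation of `a / b`, cut off to `0` for `n ≥ ε⁻¹`; it tends to `a / b`
as `ε → 0`. -/
noncomputable def regularizedQuotient (ε n a b : ℝ) : ℝ :=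
  max 0 (1 - ε * n) * (a * b / (b ^ 2 + ε))

variable {ε n : ℝ} (hε : 0 < ε) (hn : 0 ≤ n) (a b : ℝ)

include hε hn

lemma exists_regularizedQuotient_eq_mul :
    ∃ θ ∈ Set.Icc (0 : ℝ) 1, regularizedQuotient ε n a b = θ * (a / b) ∧
      (b ≠ 0 → 1 - θ ≤ ε * (n + (1 / b) ^ 2)) := by
  have hden : 0 < b ^ 2 + ε := by positivity
  set c := max 0 (1 - ε * n) with hc
  set v := b ^ 2 / (b ^ 2 + ε) with hv
  have hc0 : 0 ≤ c := le_max_left _ _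
  have hc1 : c ≤ 1 := max_le zero_le_one (by linarith [mul_nonneg hε.le hn])
  have hv0 : 0 ≤ v := by positivity
  have hv1 : v ≤ 1 := (div_le_one hden).2 (by linarith)
  refine ⟨c * v, ⟨mul_nonneg hc0 hv0, mul_le_one₀ hc1 hv0 hv1⟩, ?_, fun hb ↦ ?_⟩
  · rcases eq_or_ne b 0 with rfl | hb
    · simp [regularizedQuotient]
    · rw [regularizedQuotient, ← hc, hv]
      field_simp
  · have hc2 : 1 - c ≤ ε * n := by linarith [le_max_right 0 (1 - ε * n)]
    have hv2 : 1 - v ≤ ε * (1 / b) ^ 2 := by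
      calc 1 - v = ε / (b ^ 2 + ε) := by rw [hv]; field_simp; ring
        _ ≤ ε / b ^ 2 := by gcongr; linarith
        _ = ε * (1 / b) ^ 2 := by ring
    nlinarith

lemma abs_regularizedQuotient_le : |regularizedQuotient ε n a b| ≤ |a / b| := by
  obtain ⟨θ, ⟨hθ0, hθ1⟩, heq, -⟩ := exists_regularizedQuotient_eq_mul hε hn a b
  rw [heq, abs_mul, abs_of_nonneg hθ0]
  exact mul_le_of_le_one_left (abs_nonneg _) hθ1

lemma abs_div_sub_regularizedQuotient_le {b : ℝ} (hb : b ≠ 0) :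
    |a / b - regularizedQuotient ε n a b| ≤ ε * (n ^ 2 + (a / b) ^ 2 + ((1 / b) ^ 2) ^ 2) := by
  obtain ⟨θ, ⟨-, hθ1⟩, heq, hθ⟩ := exists_regularizedQuotient_eq_mul hε hn a b
  generalize a / b = r at *
  generalize (1 / b) ^ 2 = u at *
  calc |r - regularizedQuotient ε n a b| = |r| * (1 - θ) := by
        rw [heq, ← abs_of_nonneg (sub_nonneg.2 hθ1), ← abs_mul]; ring_nf
    _ ≤ |r| * (ε * (n + u)) := by gcongr; exact hθ hb
    _ = ε * (|r| * (n + u)) := by ring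
    _ ≤ ε * (n ^ 2 + r ^ 2 + u ^ 2) := by
        gcongr
        nlinarith [sq_abs r, sq_nonneg (|r| - (n + u)), sq_nonneg (n - u)]

end RegularizedQuotient

section PositiveExtension

variable {σ : Type*} {D : Submonoid (MvPolynomial σ ℝ)} {L : Localization D →ₗ[ℝ] ℝ}

variable (D) in
/-- The cone of pairs of a fraction and a compactly supported function whose sum is nonnegative
wherever the fraction is defined. -/
noncomputable def nonnegSumCone : PointedCone ℝ (Localization D × C_c(σ → ℝ, ℝ)) where
  carrier := {x | 0 ≤ fractionGerm D x.1 + ↑(x.2 : (σ → ℝ) → ℝ)}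
  add_mem' {x y} hx hy := by
    rw [Set.mem_ofPred_eq, Prod.fst_add, Prod.snd_add, map_add,
      CompactlySupportedContinuousMap.coe_add, Germ.coe_add, add_add_add_comm]
    exact add_nonneg hx hy
  zero_mem' := by simp
  smul_mem' c x hx := by
    have hc : (0 : Germ (nonvanishingFilter D) ℝ) ≤ ↑(fun _ : σ → ℝ ↦ (c : ℝ)) :=
      Germ.const_le c.2
    have heq : fractionGerm D (c • x).1 + ↑((c • x).2 : (σ → ℝ) → ℝ) =
        ↑(fun _ : σ → ℝ ↦ (c : ℝ)) * (fractionGerm D x.1 + ↑(x.2 : (σ → ℝ) → ℝ)) := by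
      rw [mul_add, ← fractionGerm_smul]
      rfl
    rw [Set.mem_ofPred_eq, heq]
    exact mul_nonneg hc hx

lemma exists_extension_nonneg_on_nonnegSumCone (hL : ∀ a, 0 ≤ fractionGerm D a → 0 ≤ L a) :
    ∃ Λ : C_c(σ → ℝ, ℝ) →ₗ[ℝ] ℝ, ∀ x ∈ nonnegSumCone D, 0 ≤ L x.1 + Λ x.2 := by
  let F : (Localization D × C_c(σ → ℝ, ℝ)) →ₗ.[ℝ] ℝ :=
    { domain := (⊤ : Submodule ℝ (Localization D)).prod ⊥
      toFun := (L ∘ₗ LinearMap.fst ℝ _ _) ∘ₗ Submodule.subtype _ }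
  have hF : ∀ x : F.domain, (x : Localization D × C_c(σ → ℝ, ℝ)) ∈ nonnegSumCone D → 0 ≤ F x := by
    rintro ⟨⟨a, g⟩, hdom⟩ hx
    obtain rfl : g = 0 := hdom.2
    exact hL a ((add_zero (fractionGerm D a)).symm ▸ hx)
  have hdense (y : Localization D × C_c(σ → ℝ, ℝ)) :
      ∃ x : F.domain, (x : Localization D × C_c(σ → ℝ, ℝ)) + y ∈ nonnegSumCone D := by
    obtain ⟨a, g⟩ := y
    obtain ⟨M, hM⟩ := g.hasCompactSupport.exists_bound_of_continuous g.continuous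
    refine ⟨⟨(Localization.mk (C M) 1 - a, 0), trivial, rfl⟩, ?_⟩
    change 0 ≤ fractionGerm D (Localization.mk (C M) 1 - a + a) + ↑⇑(0 + g)
    rw [sub_add_cancel, zero_add, fractionGerm_mk, ← Germ.coe_add, Germ.coe_nonneg]
    refine .of_forall fun t ↦ ?_
    simpa [neg_le_iff_add_nonneg'] using (abs_le.1 (hM t)).1
  obtain ⟨G, hGF, hG⟩ := riesz_extension (nonnegSumCone D) F hF hdense
  refine ⟨G ∘ₗ LinearMap.inr ℝ _ _, fun x hx ↦ ?_⟩
  calc 0 ≤ G x := hG x hx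
    _ = G (x.1, 0) + G (0, x.2) := by rw [← map_add, Prod.mk_add_mk, add_zero, zero_add]
    _ = L x.1 + G (0, x.2) := congr_arg (· + _) (hGF ⟨(x.1, 0), trivial, rfl⟩)

variable {Λ : C_c(σ → ℝ, ℝ) →ₗ[ℝ] ℝ} (hΛ : ∀ x ∈ nonnegSumCone D, 0 ≤ L x.1 + Λ x.2)

include hΛ

lemma abs_apply_sub_apply_le {a b : Localization D} {F G : (σ → ℝ) → ℝ} {g : C_c(σ → ℝ, ℝ)}
    (ha : fractionGerm D a = ↑F) (hb : fractionGerm D b = ↑G)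
    (hFG : ∀ᶠ t in nonvanishingFilter D, |F t - g t| ≤ G t) : |L a - Λ g| ≤ L b := by
  have hsub : (b - a, g) ∈ nonnegSumCone D := by
    change 0 ≤ fractionGerm D (b - a) + ↑⇑g
    rw [map_sub, ha, hb, ← Germ.coe_sub, ← Germ.coe_add, Germ.coe_nonneg]
    filter_upwards [hFG] with t ht
    change 0 ≤ G t - F t + g t
    linarith [(abs_le.1 ht).2]
  have hadd : (b + a, -g) ∈ nonnegSumCone D := by
    change 0 ≤ fractionGerm D (b + a) + ↑⇑(-g)
    rw [map_add, ha, hb, ← Germ.coe_add, ← Germ.coe_add, Germ.coe_nonneg]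
    filter_upwards [hFG] with t ht
    change 0 ≤ G t + F t + -g t
    linarith [(abs_le.1 ht).1]
  have h₁ := hΛ _ hsub
  have h₂ := hΛ _ hadd
  rw [map_sub] at h₁
  rw [map_add, map_neg] at h₂
  exact abs_le.2 ⟨by linarith, by linarith⟩

end PositiveExtension

section FractionApprox

variable {σ : Type*} [Fintype σ]

/-- The regularized quotients of `p` by `q` with `ε = (n + 1)⁻¹`, cut off on large balls:
compactly supported continuous functions converging pointwise to `p / q`. -/
noncomputable def fractionApprox (p q : MvPolynomial σ ℝ) (n : ℕ) : C_c(σ → ℝ, ℝ) where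
  toFun t := regularizedQuotient (1 / ((n : ℝ) + 1)) (t ⬝ᵥ t) (eval t p) (eval t q)
  continuous_toFun := by
    have hp := MvPolynomial.continuous_eval p
    have hq := MvPolynomial.continuous_eval q
    have (t : σ → ℝ) : eval t q ^ 2 + 1 / ((n : ℝ) + 1) ≠ 0 := by positivity
    unfold regularizedQuotient
    fun_prop (disch := assumption)
  hasCompactSupport' := by
    refine .intro (isCompact_closedBall (0 : σ → ℝ) (n + 1)) fun t ht ↦ ?_
    obtain ⟨i, hi⟩ : ∃ i, (n : ℝ) + 1 < |t i| := by
      have hn : (0 : ℝ) ≤ n + 1 := by positivity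
      simpa [pi_norm_le_iff_of_nonneg hn] using ht
    have hle : t i * t i ≤ t ⬝ᵥ t :=
      Finset.single_le_sum (f := fun i ↦ t i * t i) (fun i _ ↦ mul_self_nonneg _)
        (Finset.mem_univ i)
    have hfar : 1 - 1 / ((n : ℝ) + 1) * (t ⬝ᵥ t) ≤ 0 := by
      rw [sub_nonpos, div_mul_eq_mul_div, one_le_div (by positivity), one_mul]
      nlinarith [abs_mul_abs_self (t i)]
    rw [regularizedQuotient, max_eq_left hfar, zero_mul]

lemma abs_fractionApprox_le (p q : MvPolynomial σ ℝ) (n : ℕ) (t : σ → ℝ) :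
    |fractionApprox p q n t| ≤ |eval t p / eval t q| :=
  abs_regularizedQuotient_le Nat.one_div_pos_of_nat (dotProduct_self_star_nonneg t) _ _

lemma abs_div_sub_fractionApprox_le (p : MvPolynomial σ ℝ) {q : MvPolynomial σ ℝ} (n : ℕ)
    {t : σ → ℝ} (ht : eval t q ≠ 0) :
    |eval t p / eval t q - fractionApprox p q n t| ≤ 1 / ((n : ℝ) + 1) *
      ((t ⬝ᵥ t) ^ 2 + (eval t p / eval t q) ^ 2 + ((1 / eval t q) ^ 2) ^ 2) :=
  abs_div_sub_regularizedQuotient_le Nat.one_div_pos_of_nat (dotProduct_self_star_nonneg t) _ ht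

lemma tendsto_fractionApprox (p q : MvPolynomial σ ℝ) (t : σ → ℝ) :
    Tendsto (fun n ↦ fractionApprox p q n t) atTop (𝓝 (eval t p / eval t q)) := by
  rcases eq_or_ne (eval t q) 0 with ht | ht
  · have (n : ℕ) : fractionApprox p q n t = 0 :=
      abs_nonpos_iff.1 (by simpa [ht] using abs_fractionApprox_le p q n t)
    simp [this, ht]
  · rw [tendsto_iff_norm_sub_tendsto_zero]
    refine squeeze_zero (fun _ ↦ norm_nonneg _) (fun n ↦ ?_) (g := fun n : ℕ ↦ 1 / ((n : ℝ) + 1) *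
      ((t ⬝ᵥ t) ^ 2 + (eval t p / eval t q) ^ 2 + ((1 / eval t q) ^ 2) ^ 2)) ?_
    · rw [norm_sub_rev]
      exact abs_div_sub_fractionApprox_le p n ht
    · simpa using (tendsto_one_div_add_atTop_nhds_zero_nat (𝕜 := ℝ)).mul_const _

variable {D : Submonoid (MvPolynomial σ ℝ)} {L : Localization D →ₗ[ℝ] ℝ}
  {Λ : C_c(σ → ℝ, ℝ) →ₗ[ℝ] ℝ}

lemma tendsto_apply_fractionApprox (hΛ : ∀ x ∈ nonnegSumCone D, 0 ≤ L x.1 + Λ x.2)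
    (p : MvPolynomial σ ℝ) (q : D) :
    Tendsto (fun n ↦ Λ (fractionApprox p q n)) atTop (𝓝 (L (Localization.mk p q))) := by
  let b : Localization D :=
    Localization.mk (X ⬝ᵥ X) 1 ^ 2 + Localization.mk p q ^ 2 + (Localization.mk 1 q ^ 2) ^ 2
  have hb (c : ℝ) : fractionGerm D (c • b) = ↑fun t ↦ c *
      ((t ⬝ᵥ t) ^ 2 + (eval t p / eval t q.1) ^ 2 + ((1 / eval t q.1) ^ 2) ^ 2) := by
    have hX (t : σ → ℝ) : eval t (X ⬝ᵥ X) = t ⬝ᵥ t := by simp [dotProduct]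
    simp only [b, fractionGerm_smul, map_add, map_pow, fractionGerm_mk, hX, map_one,
      Submonoid.coe_one, div_one]
    rfl
  have hle (n : ℕ) :
      ‖Λ (fractionApprox p q n) - L (Localization.mk p q)‖ ≤ 1 / ((n : ℝ) + 1) * L b := by
    rw [norm_sub_rev, ← smul_eq_mul, ← map_smul]
    exact abs_apply_sub_apply_le hΛ (fractionGerm_mk p q) (hb _)
      ((eventually_eval_ne_zero q).mono fun t ht ↦ abs_div_sub_fractionApprox_le p n ht)
  rw [tendsto_iff_norm_sub_tendsto_zero]
  refine squeeze_zero (fun _ ↦ norm_nonneg _) hle ?_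
  simpa using tendsto_one_div_add_atTop_nhds_zero_nat.mul_const (L b)

lemma apply_abs_fractionApprox_le (hΛ : ∀ x ∈ nonnegSumCone D, 0 ≤ L x.1 + Λ x.2)
    (p : MvPolynomial σ ℝ) (q : D) (n : ℕ) :
    Λ |fractionApprox p q n| ≤ L (1 + Localization.mk p q ^ 2) := by
  have hb : fractionGerm D (1 + Localization.mk p q ^ 2) =
      ↑fun t ↦ 1 + (eval t p / eval t q.1) ^ 2 := by
    rw [map_add, map_one, map_pow, fractionGerm_mk]
    rfl
  have h := abs_apply_sub_apply_le hΛ (a := 0) (g := |fractionApprox p q n|) (map_zero _) hb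
    (.of_forall fun t ↦ ?_)
  · rw [map_zero, zero_sub, abs_neg] at h
    exact (le_abs_self _).trans h
  · have hr := abs_fractionApprox_le p q.1 n t
    generalize eval t p / eval t q.1 = r at *
    change |0 - |fractionApprox p q.1 n| t| ≤ _
    have : |fractionApprox p q.1 n| t = |fractionApprox p q.1 n t| := rfl
    rw [this, zero_sub, abs_neg, abs_abs]
    nlinarith [sq_abs r, sq_nonneg (|r| - 1)]

end FractionApprox

lemma integrable_of_tendsto_of_integral_abs_le {α : Type*} [MeasurableSpace α] {μ : Measure α}
    {F : ℕ → α → ℝ} {f : α → ℝ} {M : ℝ} (hF : ∀ n, Integrable (F n) μ)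
    (hFf : ∀ᵐ x ∂μ, Tendsto (fun n ↦ F n x) atTop (𝓝 (f x))) (hM : ∀ n, ∫ x, |F n x| ∂μ ≤ M) :
    Integrable f μ := by
  have hm (n : ℕ) := (hF n).aestronglyMeasurable
  have hle (n : ℕ) : eLpNorm (F n) 1 μ ≤ ENNReal.ofReal M := by
    rw [eLpNorm_one_eq_lintegral_enorm, ← ofReal_integral_norm_eq_lintegral_enorm (hF n)]
    exact ENNReal.ofReal_le_ofReal (hM n)
  refine memLp_one_iff_integrable.1 ⟨aestronglyMeasurable_of_tendsto_ae _ hm hFf, ?_⟩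
  calc eLpNorm f 1 μ ≤ liminf (fun n ↦ eLpNorm (F n) 1 μ) atTop :=
        Lp.eLpNorm_lim_le_liminf_eLpNorm hm f hFf
    _ ≤ ENNReal.ofReal M := liminf_le_of_frequently_le' (.of_forall hle)
    _ < ⊤ := ENNReal.ofReal_lt_top

/-- **Haviland's theorem** for fractions of polynomials. -/
theorem exists_measure_of_forall_fractionGerm_nonneg {σ : Type*} [Finite σ]
    {D : Submonoid (MvPolynomial σ ℝ)} {L : Localization D →ₗ[ℝ] ℝ}
    (hL : ∀ a, 0 ≤ fractionGerm D a → 0 ≤ L a) :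
    ∃ μ : Measure (σ → ℝ), ∀ (p : MvPolynomial σ ℝ) (q : D),
      Integrable (fun t ↦ eval t p / eval t q.1) μ ∧
        L (Localization.mk p q) = ∫ t, eval t p / eval t q.1 ∂μ := by
  have := Fintype.ofFinite σ
  obtain ⟨Λ, hΛ⟩ := exists_extension_nonneg_on_nonnegSumCone hL
  have hΛ_nonneg (g : C_c(σ → ℝ, ℝ)) (hg : 0 ≤ g) : 0 ≤ Λ g := by
    have hmem : (0, g) ∈ nonnegSumCone D := by
      change 0 ≤ fractionGerm D 0 + ↑⇑g
      rw [map_zero, zero_add, Germ.coe_nonneg]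
      exact .of_forall hg
    simpa using hΛ _ hmem
  let μ := RealRMK.rieszMeasure (PositiveLinearMap.mk₀ Λ hΛ_nonneg)
  have hμ (g : C_c(σ → ℝ, ℝ)) : ∫ t, g t ∂μ = Λ g := RealRMK.integral_rieszMeasure _ g
  have hint (g : C_c(σ → ℝ, ℝ)) : Integrable g μ :=
    g.continuous.integrable_of_hasCompactSupport g.hasCompactSupport
  refine ⟨μ, fun p q ↦ ?_⟩
  have hlim : ∀ᵐ t ∂μ, Tendsto (fun n ↦ fractionApprox p q.1 n t) atTop
      (𝓝 (eval t p / eval t q.1)) := .of_forall (tendsto_fractionApprox p q.1)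
  have hpq : Integrable (fun t ↦ eval t p / eval t q.1) μ :=
    integrable_of_tendsto_of_integral_abs_le (fun n ↦ hint _) hlim fun n ↦
      (hμ |fractionApprox p q.1 n|).trans_le (apply_abs_fractionApprox_le hΛ p q n)
  refine ⟨hpq, tendsto_nhds_unique (tendsto_apply_fractionApprox hΛ p q) ?_⟩
  simp_rw [← hμ]
  exact tendsto_integral_of_dominated_convergence _ (fun n ↦ (hint _).aestronglyMeasurable)
    hpq.abs (fun n ↦ .of_forall (abs_fractionApprox_le p q.1 n)) hlim

end RationalMoment

/-! ### The moment problem -/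

open MvPolynomial MeasureTheory RationalMoment in
theorem rational_moment_problem_general_general {σ : Type*} [Finite σ]
    (D₀ : Submonoid (MvPolynomial σ ℝ)) (_h₀ : 0 ∉ D₀) {S : Set (MvPolynomial σ ℝ)} (hS : S.Finite)
    (hfib : ∀ q ∈ D₀, ∃ D ≤ D₀, q ∈ D ∧ D.FG ∧
      HasCylindricalFibres (algebraMap _ (Localization D) '' S))
    (L₀ : Localization D₀ →ₗ[ℝ] ℝ)
    (hL₀ : ∀ a, IsInPreordering (algebraMap _ (Localization D₀) '' S) a → 0 ≤ L₀ a) :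
    ∃ μ : Measure (σ → ℝ), ∀ (p q : MvPolynomial σ ℝ) (hq : q ∈ D₀),
      Integrable (fun x ↦ eval x p / eval x q) μ ∧
        L₀ (Localization.mk p ⟨q, hq⟩) = ∫ x, eval x p / eval x q ∂μ := by
  suffices hpos : ∀ a, 0 ≤ fractionGerm D₀ a → 0 ≤ L₀ a by
    obtain ⟨μ, hμ⟩ := exists_measure_of_forall_fractionGerm_nonneg hpos
    exact ⟨μ, fun p q hq ↦ hμ p ⟨q, hq⟩⟩
  intro a ha
  obtain ⟨p, ⟨q, hq₀⟩, rfl, hpq⟩ := exists_eq_mk_of_fractionGerm_nonneg ha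
  obtain ⟨D, hD₀, hq, hD, hfibD⟩ := hfib q hq₀
  exact apply_mk_nonneg_of_hasCylindricalFibres hD₀ hD hS hfibD hL₀ hq hpq

/-- **Theorem 3.2 (rational moment problem, general multiplicative sets).**
Let `𝔻₀` be a (not necessarily finitely generated) multiplicative set in
`ℝ[x₁,…,x_d]` and `f₁,…,f_k ∈ ℝ[x₁,…,x_d]`.  Suppose that every finitely
generated multiplicative subset `𝔻 ⊆ 𝔻₀` admits elements `h₁,…,h_m` of
`A_𝔻 = 𝔻⁻¹ℝ[x₁,…,x_d]` satisfying the boundedness assumption (i) and the fibre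
assumption (ii) of Theorem 3.1.  Then every linear functional `L₀` on
`A₀ = 𝔻₀⁻¹ℝ[x₁,…,x_d]` that is nonnegative on the preordering generated by
`f₁,…,f_k` is given by a positive Borel measure on `ℝ^d`. -/
theorem rational_moment_problem_general {d : ℕ}
    (𝔻₀ : Submonoid (MvPolynomial (Fin d) ℝ)) (h𝔻0 : (0 : MvPolynomial (Fin d) ℝ) ∉ 𝔻₀)
    {k : ℕ} (f : Fin k → MvPolynomial (Fin d) ℝ)
    (hyp : ∀ 𝔻 : Submonoid (MvPolynomial (Fin d) ℝ), 𝔻 ≤ 𝔻₀ → 𝔻.FG →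
      ∃ (m : ℕ) (h : Fin m → Localization 𝔻),
        (∃ C : ℝ, ∀ t : Fin d → ℝ, ∀ ht : ∀ q ∈ 𝔻, MvPolynomial.eval t q ≠ 0,
          (∀ i : Fin k, 0 ≤ MvPolynomial.eval t (f i)) →
          ∀ j : Fin m, |evalLoc 𝔻 t ht (h j)| ≤ C) ∧
        (∀ lam : Fin m → ℝ,
          (∃ t : Fin d → ℝ, ∃ ht : ∀ q ∈ 𝔻, MvPolynomial.eval t q ≠ 0,
            (∀ i : Fin k, 0 ≤ MvPolynomial.eval t (f i)) ∧
            ∀ j : Fin m, evalLoc 𝔻 t ht (h j) = lam j) →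
          ∃ (ℰ : Submonoid (Polynomial ℝ)), (0 : Polynomial ℝ) ∉ ℰ ∧ ℰ.FG ∧
            ∃ (Cb : FinCommAlg)
              (ρ : TensorProduct ℝ (Localization ℰ) Cb.carrier →ₐ[ℝ]
                (Localization 𝔻 ⧸ Ideal.span (Set.range fun j : Fin m =>
                  h j - algebraMap ℝ (Localization 𝔻) (lam j)))),
              Function.Surjective ρ))
    (L₀ : Localization 𝔻₀ →ₗ[ℝ] ℝ)
    (hL₀ : ∀ a : Localization 𝔻₀,
      IsInPreordering
        (Set.range fun i : Fin k =>
          algebraMap (MvPolynomial (Fin d) ℝ) (Localization 𝔻₀) (f i)) a → 0 ≤ L₀ a) :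
    ∃ μ : MeasureTheory.Measure (Fin d → ℝ),
      ∀ (p : MvPolynomial (Fin d) ℝ) (q : MvPolynomial (Fin d) ℝ) (hq : q ∈ 𝔻₀),
        MeasureTheory.Integrable
          (fun x : Fin d → ℝ => MvPolynomial.eval x p / MvPolynomial.eval x q) μ ∧
        L₀ (Localization.mk p ⟨q, hq⟩) =
          ∫ x : Fin d → ℝ, MvPolynomial.eval x p / MvPolynomial.eval x q ∂μ := by
  refine rational_moment_problem_general_general 𝔻₀ h𝔻0 (Set.finite_range f) (fun q hq ↦ ?_) L₀
    (by rwa [← Set.range_comp])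
  have hle : Submonoid.closure {q} ≤ 𝔻₀ := Submonoid.closure_le.2 (Set.singleton_subset_iff.2 hq)
  have hFG : (Submonoid.closure {q}).FG := ⟨{q}, by rw [Finset.coe_singleton]⟩
  obtain ⟨m, h, hbdd, hcyl⟩ := hyp _ hle hFG
  refine ⟨_, hle, Submonoid.mem_closure_singleton_self, hFG,
    RationalMoment.hasCylindricalFibres_of_evalLoc h (by simpa only [Set.forall_mem_range])
      fun lam hlam ↦ ?_⟩
  obtain ⟨ℰ, -, hρ⟩ := hcyl lam (by simpa only [Set.forall_mem_range] using hlam)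
  exact ⟨ℰ, hρ⟩
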